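/- arXiv:1712.04549 — 2 statements merged into one kernel-verified Lean document; each statement's English description precedes it below -/
import Mathlib

section
/- Let h be a positive integer, let a and k be nonnegative integers, and let m = (a+2)h + a. Let (T,X) be a tree-decomposition of a graph G and let φ: CT_m ↪ T be a homeomorphic embedding such that |X_t| ≥ k for all t in the span sp(φ). If for every vertex t of CT_m at height l ≤ m − a there exist a descendant t' of t at height l + a and a vertex r on the path in T between φ(t) and φ(t') such that |X_r| = k, then there exists a cascade of height h and size k in (T,X). -/
/-!
Common definitions: minors, widths, connectivity, the specific graphs
`K4`, `K23`, `C32`, `graphA`, the binary trees `CT_h`, the graphs `𝒫_k`, `𝒬_k`,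
the trees `T_h`, homeomorphic embeddings, cascades, and related notions,
following Dang--Thomas, "Minors of two-connected graphs of large path-width".
-/

open SimpleGraph

/-- A minor model of `H` in `G`: branch sets `f w` are nonempty, connected,
pairwise disjoint, and edges of `H` are realized by edges of `G` between branch sets. -/
def IsMinorModel {W V : Type*} (H : SimpleGraph W) (G : SimpleGraph V) (f : W → Set V) : Prop :=
  (∀ w, (f w).Nonempty) ∧
  (∀ w, (G.induce (f w)).Connected) ∧
  (∀ w₁ w₂ : W, w₁ ≠ w₂ → Disjoint (f w₁) (f w₂)) ∧
  (∀ w₁ w₂ : W, H.Adj w₁ w₂ → ∃ v₁ ∈ f w₁, ∃ v₂ ∈ f w₂, G.Adj v₁ v₂)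

/-- `H` is (isomorphic to) a minor of `G`. -/
def IsMinor {W V : Type*} (H : SimpleGraph W) (G : SimpleGraph V) : Prop :=
  ∃ f : W → Set V, IsMinorModel H G f

/-- The complete graph on four vertices. -/
def K4 : SimpleGraph (Fin 4) := ⊤

/-- The complete bipartite graph `K_{2,3}`. -/
def K23 : SimpleGraph (Fin 2 ⊕ Fin 3) := completeBipartiteGraph (Fin 2) (Fin 3)

/-- The graph `A`: a cycle `a₁a₂a₃a₄a₅a₆a₁` plus the edges `a₁a₃`, `a₃a₅`, `a₅a₁`. -/
def graphA : SimpleGraph (Fin 6) :=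
  SimpleGraph.fromEdgeSet
    {s(0, 1), s(1, 2), s(2, 3), s(3, 4), s(4, 5), s(5, 0), s(0, 2), s(2, 4), s(4, 0)}

/-- The graph `C_{3,2}`: two disjoint triangles. -/
def C32 : SimpleGraph (Fin 2 × Fin 3) :=
  SimpleGraph.fromRel (fun u v => u.1 = v.1)

/-- A graph is outerplanar iff it has no `K₄` minor and no `K_{2,3}` minor
(the classical characterization of outerplanarity). -/
def Outerplanar {V : Type*} (G : SimpleGraph V) : Prop :=
  ¬ IsMinor K4 G ∧ ¬ IsMinor K23 G

/-- `G` is `k`-connected: it has more than `k` vertices and deleting fewer than `k`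
vertices leaves a connected graph. -/
def IsKConnected {V : Type*} [Fintype V] (k : ℕ) (G : SimpleGraph V) : Prop :=
  k + 1 ≤ Fintype.card V ∧
  ∀ S : Finset V, S.card < k → (G.induce ((↑S : Set V)ᶜ)).Connected

/-- `(Tr, X)` is a tree-decomposition of `G`: `Tr` is a tree, the bags `X t` cover all
vertices and edges (W1), and whenever `t₂` lies on the path of `Tr` between `t₁` and `t₃`
we have `X t₁ ∩ X t₃ ⊆ X t₂` (W2). -/
def IsTreeDecomp {V T : Type*} (G : SimpleGraph V) (Tr : SimpleGraph T) (X : T → Finset V) :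
    Prop :=
  Tr.IsTree ∧
  (∀ v : V, ∃ t, v ∈ X t) ∧
  (∀ u v : V, G.Adj u v → ∃ t, u ∈ X t ∧ v ∈ X t) ∧
  (∀ (t₁ t₂ t₃ : T) (p : Tr.Walk t₁ t₃), p.IsPath → t₂ ∈ p.support →
    ∀ v : V, v ∈ X t₁ → v ∈ X t₃ → v ∈ X t₂)

/-- A path-decomposition of `G`, with bags indexed by `Fin n`. -/
def IsPathDecomp {V : Type*} (G : SimpleGraph V) {n : ℕ} (X : Fin n → Finset V) : Prop :=
  (∀ v : V, ∃ i, v ∈ X i) ∧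
  (∀ u v : V, G.Adj u v → ∃ i, u ∈ X i ∧ v ∈ X i) ∧
  (∀ i j k : Fin n, i ≤ j → j ≤ k → ∀ v : V, v ∈ X i → v ∈ X k → v ∈ X j)

/-- The path-width of a finite graph: the least `w` such that `G` has a
path-decomposition all of whose bags have at most `w + 1` vertices. -/
noncomputable def pathwidth {V : Type*} [Fintype V] (G : SimpleGraph V) : ℕ :=
  sInf {w | ∃ (n : ℕ) (X : Fin n → Finset V), IsPathDecomp G X ∧ ∀ i, (X i).card ≤ w + 1}

/-- The tree-width of a finite graph: the least `w` such that `G` has a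
tree-decomposition all of whose bags have at most `w + 1` vertices. -/
noncomputable def treewidth {V : Type*} [Fintype V] (G : SimpleGraph V) : ℕ :=
  sInf {w | ∃ (T : Type) (_ : Fintype T) (Tr : SimpleGraph T) (X : T → Finset V),
    IsTreeDecomp G Tr X ∧ ∀ t, (X t).card ≤ w + 1}

/-- Vertices of the binary tree `CT_h`: paths from the root, recorded as reversed
lists of left/right moves, of length at most `h`. -/
abbrev CTVert (h : ℕ) := {l : List Bool // l.length ≤ h}

/-- The binary tree `CT_h` of height `h`. -/
def CTgraph (h : ℕ) : SimpleGraph (CTVert h) :=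
  SimpleGraph.fromEdgeSet
    {e | ∃ (b : Bool) (σ : List Bool) (hσ : σ.length < h),
      e = s((⟨σ, le_of_lt hσ⟩ : CTVert h), (⟨b :: σ, by simpa using hσ⟩ : CTVert h))}

/-- The graph `𝒫_k`: the binary tree `CT_k` together with one extra vertex (`none`)
adjacent to every leaf of `CT_k`. -/
def Pgraph (k : ℕ) : SimpleGraph (Option (CTVert k)) :=
  SimpleGraph.fromEdgeSet
    ({e | ∃ (b : Bool) (σ : List Bool) (hσ : σ.length < k),
        e = s(some (⟨σ, le_of_lt hσ⟩ : CTVert k), some (⟨b :: σ, by simpa using hσ⟩ : CTVert k))} ∪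
     {e | ∃ l : CTVert k, l.1.length = k ∧ e = s(none, some l)})

/-- Vertices of `𝒬_k`: the two base vertices of the root triangle (`Sum.inl false` and
`Sum.inl true`), together with one apex vertex for each node of the complete binary tree
of depth `< k` (recorded as a reversed list of moves). -/
abbrev QVert (k : ℕ) := Bool ⊕ {l : List Bool // l.length < k}

/-- The two ends of the base edge of the copy of the triangle at node `σ` of `𝒬_k`. -/
def qbase (k : ℕ) : List Bool → QVert k × QVert k
  | [] => (Sum.inl false, Sum.inl true)
  | b :: σ =>
      ((if b then (qbase k σ).2 else (qbase k σ).1),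
        if h : σ.length < k then Sum.inr ⟨σ, h⟩ else Sum.inl false)

/-- The graph `𝒬_k`, built from triangles as in the recursive definition: the triangle at
node `σ` consists of the base edge `qbase k σ` together with the apex vertex `Sum.inr σ`;
the base edge of `𝒬_k` is `s(Sum.inl false, Sum.inl true)`. -/
def Qgraph (k : ℕ) : SimpleGraph (QVert k) :=
  SimpleGraph.fromEdgeSet
    ({s(Sum.inl false, Sum.inl true)} ∪
     {e | ∃ (σ : List Bool) (h : σ.length < k),
        e = s(Sum.inr ⟨σ, h⟩, (qbase k σ).1) ∨ e = s(Sum.inr ⟨σ, h⟩, (qbase k σ).2)})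

/-- The minor vertices of the tree `T_h` (one for each string of length `≤ h`). -/
abbrev MVert (h : ℕ) := {l : List Bool // l.length ≤ h}

/-- The major vertices of the tree `T_h` (one for each string of length `≤ h - 1`). -/
abbrev JVert (h : ℕ) := {l : List Bool // l.length + 1 ≤ h}

/-- Vertices of the tree `T_h` (obtained from `CT_h` by subdividing every edge not incident
with a degree-one vertex and adding the minor root). -/
abbrev TVert (h : ℕ) := MVert h ⊕ JVert h

/-- The tree `T_h`: each major vertex `σ` is adjacent to the minor vertices `σ` (its parent),
`false :: σ` (its left neighbor) and `true :: σ` (its right neighbor). -/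
def Tgraph (h : ℕ) : SimpleGraph (TVert h) :=
  SimpleGraph.fromEdgeSet
    {e | ∃ (σ : List Bool) (hσ : σ.length + 1 ≤ h),
      e = s(Sum.inr ⟨σ, hσ⟩, Sum.inl ⟨σ, Nat.le_of_succ_le hσ⟩) ∨
      ∃ b : Bool, e = s(Sum.inr ⟨σ, hσ⟩, Sum.inl ⟨b :: σ, by simpa using hσ⟩)}

/-- A homeomorphic embedding of `TA` into `TB`: an injection such that for any two edges of
`TA` sharing an end `t`, the corresponding paths of `TB` are edge-disjoint. -/
def IsHomeoEmb {A B : Type*} (TA : SimpleGraph A) (TB : SimpleGraph B) (η : A → B) : Prop :=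
  Function.Injective η ∧
  ∀ ⦃t t₁ t₂ : A⦄, TA.Adj t t₁ → TA.Adj t t₂ → t₁ ≠ t₂ →
    ∀ (p₁ : TB.Walk (η t) (η t₁)) (p₂ : TB.Walk (η t) (η t₂)),
      p₁.IsPath → p₂.IsPath → ∀ e ∈ p₁.edges, e ∉ p₂.edges

/-- `v` lies in the span of `η`: it lies on a path of `TB` between two vertices in the
image of `η`. -/
def inSpan {A B : Type*} (TB : SimpleGraph B) (η : A → B) (v : B) : Prop :=
  ∃ (a₁ a₂ : A) (p : TB.Walk (η a₁) (η a₂)), p.IsPath ∧ v ∈ p.support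

/-- A cascade of height `h` and size `s` in the tree-decomposition `(Tr, X)`:
a homeomorphic embedding of `T_h` with `|X (η t)| = s` for every minor vertex `t`
and `|X t| ≥ s` for every `t` in the span. -/
def IsCascade {V T : Type*} (Tr : SimpleGraph T) (X : T → Finset V) (h s : ℕ)
    (η : TVert h → T) : Prop :=
  IsHomeoEmb (Tgraph h) Tr η ∧
  (∀ l : MVert h, (X (η (Sum.inl l))).card = s) ∧
  (∀ t : T, inSpan Tr η t → s ≤ (X t).card)

/-- An injective cascade with common intersection set `I`. -/
def IsInjectiveCascade {V T : Type*} (Tr : SimpleGraph T) (X : T → Finset V) (h s : ℕ)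
    (η : TVert h → T) (I : Finset V) : Prop :=
  IsCascade Tr X h s η ∧ I.card < s ∧
  ∀ t t' : TVert h, t ≠ t' → ((X (η t) : Set V) ∩ (X (η t') : Set V)) = (I : Set V)

/-- A family of `s` disjoint paths in `G \ I` (a linkage). -/
def IsLinkage {V : Type*} (G : SimpleGraph V) (I : Finset V) {s : ℕ} {x y : Fin s → V}
    (P : ∀ i : Fin s, G.Walk (x i) (y i)) : Prop :=
  (∀ i, (P i).IsPath) ∧
  (∀ i, ∀ v ∈ (P i).support, v ∉ I) ∧
  (∀ i j, i ≠ j → ∀ v ∈ (P i).support, v ∉ (P j).support)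

/-- An ordered cascade: an injective cascade of size `s + |I|` with common intersection set
`I`, together with orderings `ξ t : Fin s → X (η t) \ I` of the bags at minor vertices, such
that at every major vertex there are left and right linkages connecting corresponding
vertices. -/
def IsOrderedCascade {V T : Type*} (G : SimpleGraph V) (Tr : SimpleGraph T)
    (X : T → Finset V) (h s : ℕ) (η : TVert h → T) (I : Finset V)
    (ξ : MVert h → Fin s → V) : Prop :=
  IsInjectiveCascade Tr X h (s + I.card) η I ∧
  (∀ t : MVert h, Function.Injective (ξ t) ∧
    Set.range (ξ t) = (X (η (Sum.inl t)) : Set V) \ (I : Set V)) ∧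
  ∀ (σ : List Bool) (hσ : σ.length + 1 ≤ h),
    (∃ P : ∀ i : Fin s,
        G.Walk (ξ ⟨σ, Nat.le_of_succ_le hσ⟩ i) (ξ ⟨false :: σ, by simpa using hσ⟩ i),
      IsLinkage G I P) ∧
    (∃ Q : ∀ i : Fin s,
        G.Walk (ξ ⟨σ, Nat.le_of_succ_le hσ⟩ i) (ξ ⟨true :: σ, by simpa using hσ⟩ i),
      IsLinkage G I Q)

/-- The vertex set of the `η`-torso at the major vertex `σ` of `T_h`: the union of the bags
`X t - I` over all `t` such that the path in `Tr` from `t` to `η σ` contains none of the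
images of the three minor neighbors of `σ` as an internal vertex. -/
def torsoSet {V T : Type*} (Tr : SimpleGraph T) (X : T → Finset V) {h : ℕ}
    (η : TVert h → T) (I : Finset V) (σ : List Bool) (hσ : σ.length + 1 ≤ h) : Set V :=
  {v | v ∉ I ∧ ∃ t : T,
    (∀ p : Tr.Walk t (η (Sum.inr ⟨σ, hσ⟩)), p.IsPath →
      ∀ u : T,
        (u = η (Sum.inl ⟨σ, Nat.le_of_succ_le hσ⟩) ∨
         u = η (Sum.inl ⟨false :: σ, by simpa using hσ⟩) ∨
         u = η (Sum.inl ⟨true :: σ, by simpa using hσ⟩)) →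
        u ∈ p.support → u = t ∨ u = η (Sum.inr ⟨σ, hσ⟩)) ∧
    v ∈ X t}

/-- `H` is a tripod in `G` with all vertices in `S`, center `c` and feet `f₁, f₂, f₃`:
the union of three paths from `c` to the feet, pairwise disjoint except for `c`,
at least two of which have length at least one. -/
def IsTripodOn {V : Type*} (G : SimpleGraph V) (S : Set V) (H : G.Subgraph)
    (c f₁ f₂ f₃ : V) : Prop :=
  ∃ (W₁ : G.Walk c f₁) (W₂ : G.Walk c f₂) (W₃ : G.Walk c f₃),
    W₁.IsPath ∧ W₂.IsPath ∧ W₃.IsPath ∧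
    (∀ v ∈ W₁.support, v ∈ S) ∧ (∀ v ∈ W₂.support, v ∈ S) ∧ (∀ v ∈ W₃.support, v ∈ S) ∧
    (∀ v, v ∈ W₁.support → v ∈ W₂.support → v = c) ∧
    (∀ v, v ∈ W₁.support → v ∈ W₃.support → v = c) ∧
    (∀ v, v ∈ W₂.support → v ∈ W₃.support → v = c) ∧
    ((1 ≤ W₁.length ∧ 1 ≤ W₂.length) ∨ (1 ≤ W₁.length ∧ 1 ≤ W₃.length) ∨
      (1 ≤ W₂.length ∧ 1 ≤ W₃.length)) ∧
    H = W₁.toSubgraph ⊔ W₂.toSubgraph ⊔ W₃.toSubgraph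

/-- The major vertex `σ` has property `A_{ij}` in the ordered cascade `η` with orderings
`ξ`: there are two disjoint tripods in the `η`-torso at `σ`, with feet as prescribed. -/
def HasPropA {V T : Type*} (G : SimpleGraph V) (Tr : SimpleGraph T) (X : T → Finset V)
    {h s : ℕ} (η : TVert h → T) (I : Finset V) (ξ : MVert h → Fin s → V)
    (σ : List Bool) (hσ : σ.length + 1 ≤ h) (i j : Fin s) : Prop :=
  ∃ (Li Lj : G.Subgraph) (ci cj : V),
    (∃ m₂ m₃ : Fin s, (m₂ = i ∨ m₂ = j) ∧ (m₃ = i ∨ m₃ = j) ∧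
      IsTripodOn G (torsoSet Tr X η I σ hσ) Li ci
        (ξ ⟨σ, Nat.le_of_succ_le hσ⟩ i)
        (ξ ⟨false :: σ, by simpa using hσ⟩ m₂)
        (ξ ⟨true :: σ, by simpa using hσ⟩ m₃)) ∧
    (∃ m₂ m₃ : Fin s, (m₂ = i ∨ m₂ = j) ∧ (m₃ = i ∨ m₃ = j) ∧
      IsTripodOn G (torsoSet Tr X η I σ hσ) Lj cj
        (ξ ⟨σ, Nat.le_of_succ_le hσ⟩ j)
        (ξ ⟨false :: σ, by simpa using hσ⟩ m₂)
        (ξ ⟨true :: σ, by simpa using hσ⟩ m₃)) ∧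
    Disjoint Li.verts Lj.verts

/-- The major vertex `σ` has property `B_{ij}`: there are two tripods `L_i`, `L_j` in the
`η`-torso at `σ`, with feet `v_{m,1}, v_{m,2}, v_{m,3}` where `{v_{i,y}, v_{j,y}}` equals
`{ξ_{t_y} i, ξ_{t_y} j}` for each `y`, which intersect exactly in a path that is the
intersection of the branch of `L_i` to `v_{i,3}` and the branch of `L_j` to `v_{j,2}`,
and which avoids both centers. -/
def HasPropB {V T : Type*} (G : SimpleGraph V) (Tr : SimpleGraph T) (X : T → Finset V)
    {h s : ℕ} (η : TVert h → T) (I : Finset V) (ξ : MVert h → Fin s → V)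
    (σ : List Bool) (hσ : σ.length + 1 ≤ h) (i j : Fin s) : Prop :=
  ∃ (vi vj : Fin 3 → V) (ci cj : V)
    (Wi : ∀ y : Fin 3, G.Walk ci (vi y)) (Wj : ∀ y : Fin 3, G.Walk cj (vj y)),
    (∀ y : Fin 3, ({vi y, vj y} : Set V) =
      {(![ξ ⟨σ, Nat.le_of_succ_le hσ⟩,
          ξ ⟨false :: σ, by simpa using hσ⟩,
          ξ ⟨true :: σ, by simpa using hσ⟩] : Fin 3 → Fin s → V) y i,
       (![ξ ⟨σ, Nat.le_of_succ_le hσ⟩,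
          ξ ⟨false :: σ, by simpa using hσ⟩,
          ξ ⟨true :: σ, by simpa using hσ⟩] : Fin 3 → Fin s → V) y j}) ∧
    (∀ y, (Wi y).IsPath) ∧ (∀ y, (Wj y).IsPath) ∧
    (∀ y, ∀ v ∈ (Wi y).support, v ∈ torsoSet Tr X η I σ hσ) ∧
    (∀ y, ∀ v ∈ (Wj y).support, v ∈ torsoSet Tr X η I σ hσ) ∧
    (∀ y y' : Fin 3, y ≠ y' → ∀ v, v ∈ (Wi y).support → v ∈ (Wi y').support → v = ci) ∧
    (∀ y y' : Fin 3, y ≠ y' → ∀ v, v ∈ (Wj y).support → v ∈ (Wj y').support → v = cj) ∧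
    ((1 ≤ (Wi 0).length ∧ 1 ≤ (Wi 1).length) ∨ (1 ≤ (Wi 0).length ∧ 1 ≤ (Wi 2).length) ∨
      (1 ≤ (Wi 1).length ∧ 1 ≤ (Wi 2).length)) ∧
    ((1 ≤ (Wj 0).length ∧ 1 ≤ (Wj 1).length) ∨ (1 ≤ (Wj 0).length ∧ 1 ≤ (Wj 2).length) ∨
      (1 ≤ (Wj 1).length ∧ 1 ≤ (Wj 2).length)) ∧
    (((Wi 0).toSubgraph ⊔ (Wi 1).toSubgraph ⊔ (Wi 2).toSubgraph) ⊓
      ((Wj 0).toSubgraph ⊔ (Wj 1).toSubgraph ⊔ (Wj 2).toSubgraph)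
        = (Wi 2).toSubgraph ⊓ (Wj 1).toSubgraph) ∧
    ∃ (x y : V) (p : G.Walk x y), p.IsPath ∧
      (Wi 2).toSubgraph ⊓ (Wj 1).toSubgraph = p.toSubgraph ∧
      ci ∉ p.support ∧ cj ∉ p.support

/-- The major vertex `σ` has property `AB_{ij}`: in the `η`-torso at `σ` there are disjoint
paths `L_i, L_j` from `ξ_{t₁}(m)` to `ξ_{t₂}(m)` and disjoint paths `R_i, R_j` from
`ξ_{t₁}(m)` to `ξ_{t₃}(m)`, for `m ∈ {i, j}`. -/
def HasPropAB {V T : Type*} (G : SimpleGraph V) (Tr : SimpleGraph T) (X : T → Finset V)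
    {h s : ℕ} (η : TVert h → T) (I : Finset V) (ξ : MVert h → Fin s → V)
    (σ : List Bool) (hσ : σ.length + 1 ≤ h) (i j : Fin s) : Prop :=
  ∃ (Li : G.Walk (ξ ⟨σ, Nat.le_of_succ_le hσ⟩ i) (ξ ⟨false :: σ, by simpa using hσ⟩ i))
    (Lj : G.Walk (ξ ⟨σ, Nat.le_of_succ_le hσ⟩ j) (ξ ⟨false :: σ, by simpa using hσ⟩ j))
    (Ri : G.Walk (ξ ⟨σ, Nat.le_of_succ_le hσ⟩ i) (ξ ⟨true :: σ, by simpa using hσ⟩ i))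
    (Rj : G.Walk (ξ ⟨σ, Nat.le_of_succ_le hσ⟩ j) (ξ ⟨true :: σ, by simpa using hσ⟩ j)),
    Li.IsPath ∧ Lj.IsPath ∧ Ri.IsPath ∧ Rj.IsPath ∧
    (∀ v ∈ Li.support, v ∈ torsoSet Tr X η I σ hσ) ∧
    (∀ v ∈ Lj.support, v ∈ torsoSet Tr X η I σ hσ) ∧
    (∀ v ∈ Ri.support, v ∈ torsoSet Tr X η I σ hσ) ∧
    (∀ v ∈ Rj.support, v ∈ torsoSet Tr X η I σ hσ) ∧
    (∀ v ∈ Li.support, v ∉ Lj.support) ∧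
    (∀ v ∈ Ri.support, v ∉ Rj.support)

/-- A monotone homeomorphic embedding `T_a ↪ T_h`: the minor root maps to the minor root,
and for every major vertex with trinity `(t₁, t₂, t₃)`, the images of `t₂` and `t₃` are the
left and right neighbors of the (major) image of the vertex. -/
def IsMonotoneEmb (a h : ℕ) (γ : TVert a → TVert h) : Prop :=
  IsHomeoEmb (Tgraph a) (Tgraph h) γ ∧
  γ (Sum.inl ⟨[], Nat.zero_le a⟩) = Sum.inl ⟨[], Nat.zero_le h⟩ ∧
  ∀ (σ : List Bool) (hσ : σ.length + 1 ≤ a),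
    ∃ (τ : List Bool) (hτ : τ.length + 1 ≤ h),
      γ (Sum.inr ⟨σ, hσ⟩) = Sum.inr ⟨τ, hτ⟩ ∧
      γ (Sum.inl ⟨false :: σ, by simpa using hσ⟩) = Sum.inl ⟨false :: τ, by simpa using hτ⟩ ∧
      γ (Sum.inl ⟨true :: σ, by simpa using hσ⟩) = Sum.inl ⟨true :: τ, by simpa using hτ⟩

/-!
In a tree, `η` is a homeomorphic embedding of a connected graph as soon as adjacent vertices have
distinct images and `η t` lies between the images of any two neighbours of `t`; such a map then
preserves the betweenness relation altogether.

Starting from the root of `CT_m`, alternate between descending at most `a` levels along a segment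
`φ (top σ)`–`φ (bot σ)` that meets a bag of size `k`, which hosts the minor vertex `σ` of the
cascade, and descending one level below `bot σ` to a vertex `branch σ`, which hosts the major
vertex `σ`. The two children of `branch σ` are the tops of the next two segments, so each round
costs at most `a + 2` levels. Every point of a segment lies on the same side of a branch vertex as
both ends of the segment, hence the betweenness relations required by the cascade are inherited
from `CT_m`.
-/

section Between

variable {T : Type*} {G : SimpleGraph T} {w x y z p q : T}

/-- `y` lies between `x` and `z` in `G`: every walk from `x` to `z` passes through `y`. In a tree
this says that `y` is on the path from `x` to `z`. The lemmas about this relation are named after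
their analogues for `Wbtw`. -/
def Between (G : SimpleGraph T) (x y z : T) : Prop :=
  ∀ p : G.Walk x z, y ∈ p.support

namespace Between

theorem left (G : SimpleGraph T) (x z : T) : Between G x x z :=
  fun p => p.start_mem_support

theorem right (G : SimpleGraph T) (x z : T) : Between G x z z :=
  fun p => p.end_mem_support

theorem symm (h : Between G x y z) : Between G z y x :=
  fun p => by simpa using h p.reverse

theorem trans_right (h₁ : Between G w x z) (h₂ : Between G x y z) : Between G w y z := by
  classical
  exact fun p => p.support_dropUntil_subset_support (h₁ p) (h₂ _)

theorem trans_left (h₁ : Between G w y z) (h₂ : Between G w x y) : Between G w x z :=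
  (h₁.symm.trans_right h₂.symm).symm

theorem exists_walk_avoiding (hG : G.Connected) (h : Between G x y z) (hxy : x ≠ y) :
    ∃ p : G.Walk y z, x ∉ p.support := by
  classical
  obtain ⟨p, hp⟩ := (hG z x).exists_isPath
  refine ⟨(p.takeUntil y (h.symm p)).reverse, ?_⟩
  simpa using Walk.endpoint_notMem_support_takeUntil hp (h.symm p) hxy

theorem antisymm (hG : G.Connected) (h₁ : Between G x y z) (h₂ : Between G y x z) : x = y := by
  by_contra hxy
  obtain ⟨p, hp⟩ := h₁.exists_walk_avoiding hG hxy
  exact hp (h₂ p)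

theorem trans_right_left (hG : G.Connected) (h₁ : Between G w x z) (h₂ : Between G x y z) :
    Between G w x y := by
  by_cases hxy : x = y
  · exact hxy ▸ right G w x
  obtain ⟨q, hq⟩ := h₂.exists_walk_avoiding hG hxy
  exact fun p => ((Walk.mem_support_append_iff _ _).1 (h₁ (p.append q))).resolve_right hq

theorem trans_expand_left (hG : G.Connected) (h₁ : Between G w x y) (h₂ : Between G x y z)
    (hxy : x ≠ y) : Between G w x z := by
  obtain ⟨q, hq⟩ := h₂.exists_walk_avoiding hG hxy
  intro p
  refine ((Walk.mem_support_append_iff _ _).1 (h₁ (p.append q.reverse))).resolve_right ?_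
  simpa using hq

theorem or_of_between (h : Between G x y z) (hx : Between G p x q) :
    Between G p y z ∨ Between G q y z := by
  classical
  by_contra! hcon
  obtain ⟨⟨u, hu⟩, ⟨v, hv⟩⟩ : (∃ u : G.Walk p z, y ∉ u.support) ∧
      ∃ v : G.Walk q z, y ∉ v.support := by
    simpa only [Between, not_forall] using hcon
  rcases (Walk.mem_support_append_iff _ _).1 (hx (u.append v.reverse)) with hxu | hxv
  · exact hu (u.support_dropUntil_subset_support hxu (h _))
  · rw [Walk.support_reverse, List.mem_reverse] at hxv
    exact hv (v.support_dropUntil_subset_support hxv (h _))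

theorem convex_right (hG : G.Connected) (hp : Between G x y p) (hq : Between G x y q)
    (hz : Between G p z q) : Between G x y z := by
  by_contra hcon
  obtain ⟨u, hu⟩ : ∃ u : G.Walk x z, y ∉ u.support := by simpa only [Between, not_forall] using hcon
  have of_far_side {s : T} (hs : Between G x y s) : Between G z y s := fun v =>
    ((Walk.mem_support_append_iff _ _).1 (hs (u.append v))).resolve_left hu
  have hpzy : Between G p z y := hz.trans_right_left hG (of_far_side hq)
  obtain rfl : y = z := hpzy.symm.antisymm hG (of_far_side hp)
  exact hu u.end_mem_support

end Between

theorem between_iff_exists_isPath (hG : G.IsTree) :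
    Between G x y z ↔ ∃ p : G.Walk x z, p.IsPath ∧ y ∈ p.support := by
  classical
  constructor
  · intro h
    obtain ⟨p, hp⟩ := (hG.connected x z).exists_isPath
    exact ⟨p, hp, h p⟩
  · rintro ⟨p, hp, hy⟩ q
    have := hG.isAcyclic.subsingleton_path x z
    have hpq : p = q.toPath := congrArg Subtype.val (Subsingleton.elim ⟨p, hp⟩ q.toPath)
    exact q.support_toPath_subset_support (hpq ▸ hy)

theorem between_iff_edges_disjoint (hG : G.IsTree) :
    Between G x y z ↔ ∀ (p : G.Walk y x) (q : G.Walk y z), p.IsPath → q.IsPath →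
      ∀ e ∈ p.edges, e ∉ q.edges := by
  constructor
  · intro h p q hp hq e hep heq
    obtain ⟨v, hve, hvy⟩ : ∃ v ∈ e, v ≠ y := by
      induction e with | _ u v
      by_cases hu : u = y
      · exact ⟨v, Sym2.mem_mk_right u v, hu ▸ (p.adj_of_mem_edges hep).ne'⟩
      · exact ⟨u, Sym2.mem_mk_left u v, hu⟩
    have hx : Between G y v x :=
      (between_iff_exists_isPath hG).2 ⟨p, hp, p.mem_support_of_mem_edges hep hve⟩
    have hz : Between G y v z :=
      (between_iff_exists_isPath hG).2 ⟨q, hq, q.mem_support_of_mem_edges heq hve⟩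
    exact hvy (hx.antisymm hG.connected (h.trans_right_left hG.connected hz).symm).symm
  · intro h
    obtain ⟨p, hp⟩ := (hG.connected y x).exists_isPath
    obtain ⟨q, hq⟩ := (hG.connected y z).exists_isPath
    have htrail : (p.reverse.append q).IsTrail := by
      rw [Walk.isTrail_def, Walk.edges_append, Walk.edges_reverse, List.nodup_append']
      exact ⟨List.nodup_reverse.2 hp.isTrail.edges_nodup, hq.isTrail.edges_nodup,
        fun e he => h p q hp hq e (List.mem_reverse.1 he)⟩
    refine (between_iff_exists_isPath hG).2
      ⟨_, (hG.isAcyclic.isPath_iff_isTrail _).2 htrail, ?_⟩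
    exact (Walk.mem_support_append_iff _ _).2 (Or.inr q.start_mem_support)

theorem inSpan_iff_exists_between {A : Type*} {φ : A → T} (hG : G.IsTree) :
    inSpan G φ x ↔ ∃ a b, Between G (φ a) x (φ b) := by
  simp only [inSpan, between_iff_exists_isPath hG]

theorem inSpan_of_forall_inSpan {A B : Type*} {φ : A → T} {η : B → T} (hG : G.IsTree)
    (hη : ∀ b, inSpan G φ (η b)) (hx : inSpan G η x) : inSpan G φ x := by
  simp only [inSpan_iff_exists_between hG] at hη hx ⊢
  obtain ⟨b, c, hbc⟩ := hx
  have replace_start {b : B} {z : T} (h : Between G (η b) x z) : ∃ a, Between G (φ a) x z := by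
    obtain ⟨a, a', hb⟩ := hη b
    exact (h.or_of_between hb).elim (fun h => ⟨a, h⟩) (fun h => ⟨a', h⟩)
  obtain ⟨a, ha⟩ := replace_start hbc
  obtain ⟨a', ha'⟩ := replace_start ha.symm
  exact ⟨a', a, ha'⟩

end Between

section LocalEmbedding

variable {A T : Type*} {H : SimpleGraph A} {G : SimpleGraph T} {η : A → T} {a b c : A}

/-- A map that is an embedding around every vertex: adjacent vertices have distinct images, and
the image of a vertex lies between the images of any two of its neighbours. On connected graphs
this is the local form of `IsHomeoEmb`, see `isHomeoEmb_iff_isLocalEmbedding`. -/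
structure IsLocalEmbedding (H : SimpleGraph A) (G : SimpleGraph T) (η : A → T) : Prop where
  ne : ∀ {t t'}, H.Adj t t' → η t ≠ η t'
  between : ∀ {t t₁ t₂}, H.Adj t t₁ → H.Adj t t₂ → t₁ ≠ t₂ → Between G (η t₁) (η t) (η t₂)

namespace IsLocalEmbedding

theorem between_of_mem_support (hη : IsLocalEmbedding H G η) (hG : G.Connected)
    {p : H.Walk a c} (hp : p.IsPath) (hb : b ∈ p.support) : Between G (η a) (η b) (η c) := by
  induction p generalizing b with
  | nil =>
    obtain rfl : b = _ := by simpa using hb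
    exact Between.left _ _ _
  | @cons a a' c hadj q ih =>
    rw [Walk.cons_isPath_iff] at hp
    rw [Walk.support_cons, List.mem_cons] at hb
    rcases hb with rfl | hb
    · exact Between.left _ _ _
    have first_step : Between G (η a) (η a') (η c) := by
      cases q with
      | nil => exact Between.right _ _ _
      | @cons _ a'' _ hadj' r =>
        have ha : a ≠ a'' := by
          rintro rfl
          exact hp.2 (by simp)
        exact (hη.between hadj.symm hadj' ha).trans_expand_left hG (ih hp.1 (by simp))
          (hη.ne hadj')
    exact first_step.trans_right (ih hp.1 hb)

theorem map_between (hη : IsLocalEmbedding H G η) (hG : G.Connected) (hH : H.Connected)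
    (h : Between H a b c) : Between G (η a) (η b) (η c) := by
  obtain ⟨p, hp⟩ := (hH a c).exists_isPath
  exact hη.between_of_mem_support hG hp (h p)

theorem injective (hη : IsLocalEmbedding H G η) (hG : G.Connected) (hH : H.Connected) :
    Function.Injective η := by
  intro a c hac
  by_contra hne
  obtain ⟨p, hp⟩ := (hH a c).exists_isPath
  cases p with
  | nil => exact hne rfl
  | @cons _ b _ hadj q =>
    have hb : Between G (η a) (η b) (η c) := hη.between_of_mem_support hG hp (by simp)
    rw [← hac] at hb
    exact hη.ne hadj (hb.antisymm hG (Between.right _ _ _))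

end IsLocalEmbedding

theorem isHomeoEmb_iff_isLocalEmbedding (hG : G.IsTree) (hH : H.Connected) :
    IsHomeoEmb H G η ↔ IsLocalEmbedding H G η := by
  simp only [IsHomeoEmb, ← between_iff_edges_disjoint hG]
  exact ⟨fun h => ⟨fun hadj => h.1.ne hadj.ne, fun h₁ h₂ => h.2 h₁ h₂⟩,
    fun h => ⟨h.injective hG.connected hH, fun _ _ _ h₁ h₂ => h.between h₁ h₂⟩⟩

end LocalEmbedding

section BinaryTrees

variable {h m : ℕ} {b : Bool}

theorem CTgraph_adj {s t : CTVert m} :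
    (CTgraph m).Adj s t ↔ (∃ b, t.1 = b :: s.1) ∨ ∃ b, s.1 = b :: t.1 := by
  obtain ⟨σ, hσ⟩ := s
  obtain ⟨τ, hτ⟩ := t
  simp only [CTgraph, fromEdgeSet_adj, Set.mem_ofPred_eq, Sym2.eq_iff, Subtype.mk.injEq]
  constructor
  · rintro ⟨⟨b, ρ, -, ⟨rfl, rfl⟩ | ⟨rfl, rfl⟩⟩, -⟩
    · exact .inl ⟨b, rfl⟩
    · exact .inr ⟨b, rfl⟩
  · rintro (⟨b, rfl⟩ | ⟨b, rfl⟩)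
    · exact ⟨⟨b, σ, hτ, .inl ⟨rfl, rfl⟩⟩, by simp⟩
    · exact ⟨⟨b, τ, hσ, .inr ⟨rfl, rfl⟩⟩, by simp⟩

theorem CTgraph_connected (m : ℕ) : (CTgraph m).Connected := by
  refine (connected_iff_exists_forall_reachable _).2 ⟨⟨[], Nat.zero_le m⟩, ?_⟩
  rintro ⟨σ, hσ⟩
  induction σ with
  | nil => exact Reachable.rfl
  | cons b σ ih => exact (ih (Nat.le_of_succ_le hσ)).trans (CTgraph_adj.2 (.inl ⟨b, rfl⟩)).reachable

theorem CTgraph_exists_parent_mem_support {x y z : CTVert m} (hx : ¬ y.1 <:+ x.1)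
    (hz : y.1 <:+ z.1) (p : (CTgraph m).Walk x z) :
    y ∈ p.support ∧ ∃ v ∈ p.support, ∃ b, y.1 = b :: v.1 := by
  obtain ⟨d, hd, hfst, hsnd⟩ :=
    p.exists_boundary_dart {t | ¬ y.1 <:+ t.1} hx (by simpa using hz)
  simp only [Set.mem_ofPred_eq, not_not] at hfst hsnd
  have hfst_mem := p.dart_fst_mem_support_of_mem_darts hd
  have hsnd_mem := p.dart_snd_mem_support_of_mem_darts hd
  rcases CTgraph_adj.1 d.adj with ⟨b, hb⟩ | ⟨b, hb⟩
  · rw [hb, List.suffix_cons_iff, or_iff_left hfst] at hsnd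
    obtain rfl : y = d.snd := Subtype.ext (hsnd.trans hb.symm)
    exact ⟨hsnd_mem, d.fst, hfst_mem, b, hb⟩
  · exact absurd (hb ▸ hsnd.trans (List.suffix_cons b _)) hfst

theorem CTgraph_between_of_suffix {x y z : CTVert m} (hxy : x.1 <:+ y.1) (hyz : y.1 <:+ z.1) :
    Between (CTgraph m) x y z := by
  by_cases hyx : y.1 <:+ x.1
  · obtain rfl : x = y := Subtype.ext (hxy.eq_of_length_le hyx.length_le)
    exact Between.left _ _ _
  · exact fun p => (CTgraph_exists_parent_mem_support hyx hyz p).1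

theorem CTgraph_between_of_not_suffix {v x y z : CTVert m} (hy : y.1 = b :: v.1)
    (hx : ¬ y.1 <:+ x.1) (hz : y.1 <:+ z.1) : Between (CTgraph m) x v z := by
  intro p
  obtain ⟨v', hv', b', hy'⟩ := (CTgraph_exists_parent_mem_support hx hz p).2
  obtain rfl : v = v' := Subtype.ext (List.cons.inj (hy ▸ hy')).2
  exact hv'

/-- The child `b :: t` of `t` in `CT_m`; a leaf is its own child. -/
def CTVert.child (b : Bool) (t : CTVert m) : CTVert m :=
  if ht : t.1.length < m then ⟨b :: t.1, ht⟩ else t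

theorem CTVert.child_val {t : CTVert m} (b : Bool) (ht : t.1.length < m) :
    (CTVert.child b t).1 = b :: t.1 := by
  simp [child, ht]

theorem CTVert.length_child_le (b : Bool) (t : CTVert m) :
    (CTVert.child b t).1.length ≤ t.1.length + 1 := by
  unfold child
  split <;> simp

theorem Tgraph_adj_inr_inl {s : JVert h} {l : MVert h} :
    (Tgraph h).Adj (Sum.inr s) (Sum.inl l) ↔ l.1 = s.1 ∨ ∃ b, l.1 = b :: s.1 := by
  obtain ⟨σ, hσ⟩ := s
  obtain ⟨τ, hτ⟩ := l
  simp only [Tgraph, fromEdgeSet_adj, Set.mem_ofPred_eq, Sym2.eq_iff, reduceCtorEq, and_self,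
    or_false, Sum.inr.injEq, Sum.inl.injEq, Subtype.mk.injEq, ne_eq, not_false_eq_true, and_true]
  constructor
  · rintro ⟨_, -, ⟨rfl, rfl⟩ | ⟨b, rfl, rfl⟩⟩
    · exact .inl rfl
    · exact .inr ⟨b, rfl⟩
  · rintro (rfl | ⟨b, rfl⟩)
    · exact ⟨_, hσ, .inl ⟨rfl, rfl⟩⟩
    · exact ⟨_, hσ, .inr ⟨b, rfl, rfl⟩⟩

theorem Tgraph_not_adj_inl_inl {l l' : MVert h} :
    ¬ (Tgraph h).Adj (Sum.inl l) (Sum.inl l') := by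
  simp [Tgraph]

theorem Tgraph_not_adj_inr_inr {s s' : JVert h} :
    ¬ (Tgraph h).Adj (Sum.inr s) (Sum.inr s') := by
  simp [Tgraph]

theorem Tgraph_connected (h : ℕ) : (Tgraph h).Connected := by
  have parent_reachable (s : JVert h) :
      (Tgraph h).Reachable (Sum.inl ⟨s.1, Nat.le_of_succ_le s.2⟩) (Sum.inr s) :=
    (Tgraph_adj_inr_inl.2 (.inl rfl)).symm.reachable
  have minor_reachable (σ : List Bool) (hσ : σ.length ≤ h) :
      (Tgraph h).Reachable (Sum.inl ⟨[], Nat.zero_le h⟩) (Sum.inl ⟨σ, hσ⟩) := by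
    induction σ with
    | nil => exact Reachable.rfl
    | cons b σ ih =>
      have hb : (Tgraph h).Adj (Sum.inr ⟨σ, hσ⟩) (Sum.inl ⟨b :: σ, hσ⟩) :=
        Tgraph_adj_inr_inl.2 (.inr ⟨b, rfl⟩)
      exact ((ih _).trans (parent_reachable ⟨σ, hσ⟩)).trans hb.reachable
  refine (connected_iff_exists_forall_reachable _).2 ⟨Sum.inl ⟨[], Nat.zero_le h⟩, ?_⟩
  rintro (l | s)
  · exact minor_reachable l.1 l.2
  · exact (minor_reachable s.1 _).trans (parent_reachable s)

end BinaryTrees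

/-- The vertices of `CT_m` that guide the construction of a cascade of height `h`: the minor vertex
`σ` of `T_h` will be placed between the images of `top σ` and of its descendant `bot σ`, the major
vertex `σ` on the image of `branch σ`, a proper descendant of `bot σ`, and the segments of the two
children of `σ` start at the two children of `branch σ`. The functions are total, and their values
outside the range of the conditions are irrelevant. -/
structure CascadeFrame (h m : ℕ) where
  top : List Bool → CTVert m
  bot : List Bool → CTVert m
  branch : List Bool → CTVert m
  top_suffix_bot : ∀ {σ}, σ.length ≤ h → (top σ).1 <:+ (bot σ).1
  bot_suffix_branch : ∀ {σ}, σ.length < h → (bot σ).1 <:+ (branch σ).1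
  bot_ne_branch : ∀ {σ}, σ.length < h → bot σ ≠ branch σ
  top_cons : ∀ {σ} b, σ.length < h → (top (b :: σ)).1 = b :: (branch σ).1

namespace CascadeFrame

section Embedding

variable {h m : ℕ} {T : Type*} {G : SimpleGraph T} {φ : CTVert m → T} {r : List Bool → T}
  {σ τ : List Bool} {b : Bool} (S : CascadeFrame h m)

/-- The map `T_h → T` determined by a frame, an embedding `φ` of `CT_m` and a choice of points
`r σ` for the minor vertices. -/
def embedding (φ : CTVert m → T) (r : List Bool → T) : TVert h → T :=
  Sum.elim (fun l => r l.1) (fun s => φ (S.branch s.1))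

theorem branch_suffix_top_cons (b : Bool) (hσ : σ.length < h) :
    (S.branch σ).1 <:+ (S.top (b :: σ)).1 :=
  S.top_cons b hσ ▸ List.suffix_cons b _

theorem not_top_cons_suffix_bot (hσ : σ.length < h) : ¬ (S.top (b :: σ)).1 <:+ (S.bot σ).1 := by
  intro hsuffix
  have hle := (hsuffix.trans (S.bot_suffix_branch hσ)).length_le
  rw [S.top_cons b hσ, List.length_cons] at hle
  omega

theorem not_top_cons_suffix_bot_cons {b' : Bool} (hσ : σ.length < h) (hb : b ≠ b') :
    ¬ (S.top (b :: σ)).1 <:+ (S.bot (b' :: σ)).1 := by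
  intro hsuffix
  have htop : (S.top (b :: σ)).1 <:+ (S.top (b' :: σ)).1 :=
    List.suffix_of_suffix_length_le hsuffix (S.top_suffix_bot hσ) (by simp [S.top_cons _ hσ])
  have heq := htop.eq_of_length (by simp [S.top_cons _ hσ])
  rw [S.top_cons b hσ, S.top_cons b' hσ] at heq
  exact hb (List.cons.inj heq).1

variable {S}

theorem inSpan_embedding (hG : G.IsTree)
    (hr : ∀ σ, σ.length ≤ h → Between G (φ (S.top σ)) (r σ) (φ (S.bot σ))) (x : TVert h) :
    inSpan G φ (S.embedding φ r x) := by
  rw [inSpan_iff_exists_between hG]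
  rcases x with l | s
  · exact ⟨_, _, hr l.1 l.2⟩
  · exact ⟨_, S.branch s.1, Between.left _ _ _⟩

variable (hG : G.Connected) (hφ : IsLocalEmbedding (CTgraph m) G φ)
  (hr : ∀ σ, σ.length ≤ h → Between G (φ (S.top σ)) (r σ) (φ (S.bot σ)))
include hG hφ hr

theorem minor_ne_branch (hσ : σ.length < h) : r σ ≠ φ (S.branch σ) := by
  intro heq
  have hbot : Between G (φ (S.top σ)) (φ (S.bot σ)) (φ (S.branch σ)) :=
    hφ.map_between hG (CTgraph_connected m)
      (CTgraph_between_of_suffix (S.top_suffix_bot hσ.le) (S.bot_suffix_branch hσ))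
  have hbranch := heq ▸ hr σ hσ.le
  exact S.bot_ne_branch hσ
    (hφ.injective hG (CTgraph_connected m) (hbranch.symm.antisymm hG hbot.symm))

theorem minor_cons_ne_branch (hσ : σ.length < h) : r (b :: σ) ≠ φ (S.branch σ) := by
  intro heq
  have htop : Between G (φ (S.branch σ)) (φ (S.top (b :: σ))) (φ (S.bot (b :: σ))) :=
    hφ.map_between hG (CTgraph_connected m)
      (CTgraph_between_of_suffix (S.branch_suffix_top_cons b hσ) (S.top_suffix_bot hσ))
  have hbranch := heq ▸ hr (b :: σ) hσ
  have hval := S.top_cons b hσ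
  rw [hφ.injective hG (CTgraph_connected m) (hbranch.antisymm hG htop)] at hval
  simp at hval

theorem between_branch_minor_branch (hσ : (b :: σ).length < h) :
    Between G (φ (S.branch σ)) (r (b :: σ)) (φ (S.branch (b :: σ))) := by
  have hσ' : σ.length < h := Nat.lt_of_succ_lt hσ
  have htop : Between G (φ (S.branch σ)) (φ (S.top (b :: σ))) (φ (S.branch (b :: σ))) :=
    hφ.map_between hG (CTgraph_connected m) (CTgraph_between_of_suffix
      (S.branch_suffix_top_cons b hσ') ((S.top_suffix_bot hσ.le).trans (S.bot_suffix_branch hσ)))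
  have hbot : Between G (φ (S.top (b :: σ))) (φ (S.bot (b :: σ))) (φ (S.branch (b :: σ))) :=
    hφ.map_between hG (CTgraph_connected m)
      (CTgraph_between_of_suffix (S.top_suffix_bot hσ.le) (S.bot_suffix_branch hσ))
  exact htop.trans_right (hbot.trans_left (hr _ hσ'))

theorem between_minor_branch_minor (hσ : σ.length < h) (hτ : τ.length ≤ h)
    (hnot : ¬ (S.top (b :: σ)).1 <:+ (S.bot τ).1) :
    Between G (r τ) (φ (S.branch σ)) (r (b :: σ)) := by
  have cross {x z : CTVert m} (hx : x.1 <:+ (S.bot τ).1) (hz : (S.top (b :: σ)).1 <:+ z.1) :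
      Between G (φ x) (φ (S.branch σ)) (φ z) :=
    hφ.map_between hG (CTgraph_connected m)
      (CTgraph_between_of_not_suffix (S.top_cons b hσ) (fun h => hnot (h.trans hx)) hz)
  have cross_minor {x : CTVert m} (hx : x.1 <:+ (S.bot τ).1) :
      Between G (φ x) (φ (S.branch σ)) (r (b :: σ)) :=
    (cross hx List.suffix_rfl).convex_right hG (cross hx (S.top_suffix_bot hσ)) (hr _ hσ)
  exact ((cross_minor (S.top_suffix_bot hτ)).symm.convex_right hG
    (cross_minor List.suffix_rfl).symm (hr _ hτ)).symm

theorem between_neighbors_branch {s : JVert h} {l l' : MVert h}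
    (hl : l.1 = s.1 ∨ ∃ b, l.1 = b :: s.1) (hl' : l'.1 = s.1 ∨ ∃ b, l'.1 = b :: s.1)
    (hne : l ≠ l') : Between G (r l.1) (φ (S.branch s.1)) (r l'.1) := by
  obtain ⟨l, hlh⟩ := l
  obtain ⟨l', hlh'⟩ := l'
  obtain ⟨σ, hσ⟩ := s
  have parent_child (b : Bool) : Between G (r σ) (φ (S.branch σ)) (r (b :: σ)) :=
    between_minor_branch_minor hG hφ hr hσ (Nat.le_of_succ_le hσ) (S.not_top_cons_suffix_bot hσ)
  rcases hl with rfl | ⟨b, rfl⟩ <;> rcases hl' with rfl | ⟨b', rfl⟩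
  · exact absurd rfl hne
  · exact parent_child b'
  · exact (parent_child b).symm
  · have hb : b' ≠ b := by
      rintro rfl
      exact hne rfl
    exact between_minor_branch_minor hG hφ hr hσ hlh (S.not_top_cons_suffix_bot_cons hσ hb)

theorem between_neighbors_minor {l : MVert h} {s s' : JVert h}
    (hs : l.1 = s.1 ∨ ∃ b, l.1 = b :: s.1) (hs' : l.1 = s'.1 ∨ ∃ b, l.1 = b :: s'.1)
    (hne : s ≠ s') : Between G (φ (S.branch s.1)) (r l.1) (φ (S.branch s'.1)) := by
  obtain ⟨l, hlh⟩ := l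
  obtain ⟨s, hsh⟩ := s
  obtain ⟨s', hsh'⟩ := s'
  rcases hs with rfl | ⟨b, rfl⟩ <;> rcases hs' with hs' | ⟨b', hs'⟩
  · exact absurd (Subtype.ext hs') hne
  · obtain rfl : l = b' :: s' := hs'
    exact (between_branch_minor_branch hG hφ hr hsh).symm
  · obtain rfl : b :: s = s' := hs'
    exact between_branch_minor_branch hG hφ hr hsh'
  · exact absurd (Subtype.ext (List.cons.inj hs').2) hne

theorem isLocalEmbedding_embedding : IsLocalEmbedding (Tgraph h) G (S.embedding φ r) where
  ne := by
    have inr_inl {s : JVert h} {l : MVert h} (hadj : (Tgraph h).Adj (.inr s) (.inl l)) :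
        r l.1 ≠ φ (S.branch s.1) := by
      rcases Tgraph_adj_inr_inl.1 hadj with hl | ⟨b, hl⟩ <;> rw [hl]
      · exact minor_ne_branch hG hφ hr s.2
      · exact minor_cons_ne_branch hG hφ hr s.2
    rintro (l | s) (l' | s') hadj
    · exact absurd hadj Tgraph_not_adj_inl_inl
    · exact inr_inl hadj.symm
    · exact (inr_inl hadj).symm
    · exact absurd hadj Tgraph_not_adj_inr_inr
  between := by
    rintro (l | s) (l₁ | s₁) (l₂ | s₂) h₁ h₂ hne
    · exact absurd h₁ Tgraph_not_adj_inl_inl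
    · exact absurd h₁ Tgraph_not_adj_inl_inl
    · exact absurd h₂ Tgraph_not_adj_inl_inl
    · exact between_neighbors_minor hG hφ hr (Tgraph_adj_inr_inl.1 h₁.symm)
        (Tgraph_adj_inr_inl.1 h₂.symm) (fun h => hne (congrArg _ h))
    · exact between_neighbors_branch hG hφ hr (Tgraph_adj_inr_inl.1 h₁)
        (Tgraph_adj_inr_inl.1 h₂) (fun h => hne (congrArg _ h))
    · exact absurd h₂ Tgraph_not_adj_inr_inr
    · exact absurd h₁ Tgraph_not_adj_inr_inr
    · exact absurd h₁ Tgraph_not_adj_inr_inr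

end Embedding

section Construction

variable {a h m : ℕ} {D : CTVert m → CTVert m} {σ : List Bool}

/-- The top of the segment for `σ`, when the segment starting at `t` ends at `D t`. -/
def segmentTop (D : CTVert m → CTVert m) : List Bool → CTVert m
  | [] => ⟨[], Nat.zero_le m⟩
  | b :: σ => CTVert.child b (CTVert.child false (D (segmentTop D σ)))

theorem length_segmentTop_le (hm : (a + 2) * h + a ≤ m)
    (hD : ∀ t, t.1.length + a ≤ m → (D t).1.length ≤ t.1.length + a) (hσ : σ.length ≤ h) :
    (segmentTop D σ).1.length ≤ (a + 2) * σ.length := by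
  induction σ with
  | nil => simp [segmentTop]
  | cons b σ ih =>
    have htop := ih (Nat.le_of_succ_le hσ)
    have hmul : (a + 2) * (σ.length + 1) ≤ (a + 2) * h := Nat.mul_le_mul_left _ hσ
    have hbot := hD (segmentTop D σ) (by linarith)
    calc (segmentTop D (b :: σ)).1.length
      _ ≤ (CTVert.child false (D (segmentTop D σ))).1.length + 1 := CTVert.length_child_le ..
      _ ≤ (D (segmentTop D σ)).1.length + 1 + 1 := by gcongr; exact CTVert.length_child_le ..
      _ ≤ (a + 2) * (b :: σ).length := by rw [List.length_cons]; linarith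

theorem length_segmentTop_add_le (hm : (a + 2) * h + a ≤ m)
    (hD : ∀ t, t.1.length + a ≤ m → (D t).1.length ≤ t.1.length + a) (hσ : σ.length ≤ h) :
    (segmentTop D σ).1.length + a ≤ m :=
  calc (segmentTop D σ).1.length + a
    _ ≤ (a + 2) * σ.length + a := by gcongr; exact length_segmentTop_le hm hD hσ
    _ ≤ (a + 2) * h + a := by gcongr
    _ ≤ m := hm

theorem length_segmentBot_add_two_le (hm : (a + 2) * h + a ≤ m)
    (hD : ∀ t, t.1.length + a ≤ m → (D t).1.length ≤ t.1.length + a) (hσ : σ.length < h) :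
    (D (segmentTop D σ)).1.length + 2 ≤ m :=
  calc (D (segmentTop D σ)).1.length + 2
    _ ≤ (segmentTop D σ).1.length + a + 2 := by
      gcongr; exact hD _ (length_segmentTop_add_le hm hD hσ.le)
    _ ≤ (a + 2) * σ.length + a + 2 := by gcongr; exact length_segmentTop_le hm hD hσ.le
    _ = (a + 2) * (σ.length + 1) := by ring
    _ ≤ (a + 2) * h := Nat.mul_le_mul_left _ hσ
    _ ≤ m := Nat.le_of_add_right_le hm

/-- The frame whose segment starting at `t` ends at `D t`. -/
def ofDescendants (hm : (a + 2) * h + a ≤ m)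
    (hsuffix : ∀ t : CTVert m, t.1.length + a ≤ m → t.1 <:+ (D t).1)
    (hD : ∀ t, t.1.length + a ≤ m → (D t).1.length ≤ t.1.length + a) : CascadeFrame h m where
  top := segmentTop D
  bot σ := D (segmentTop D σ)
  branch σ := CTVert.child false (D (segmentTop D σ))
  top_suffix_bot hσ := hsuffix _ (length_segmentTop_add_le hm hD hσ)
  bot_suffix_branch hσ := by
    rw [CTVert.child_val _ (Nat.lt_of_succ_lt (length_segmentBot_add_two_le hm hD hσ))]
    exact List.suffix_cons _ _
  bot_ne_branch hσ := by
    refine Subtype.coe_ne_coe.1 ?_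
    rw [CTVert.child_val _ (Nat.lt_of_succ_lt (length_segmentBot_add_two_le hm hD hσ))]
    exact (List.cons_ne_self _ _).symm
  top_cons b hσ := by
    have hbot := length_segmentBot_add_two_le hm hD hσ
    exact CTVert.child_val b (by rw [CTVert.child_val _ (Nat.lt_of_succ_lt hbot)]; exact hbot)

end Construction

end CascadeFrame

theorem cascade_of_descendant_condition_general {V T : Type*} {Tr : SimpleGraph T} (hTr : Tr.IsTree)
    (X : T → Finset V) {h a k m : ℕ} (hm : (a + 2) * h + a ≤ m) {φ : CTVert m → T}
    (hφ : IsHomeoEmb (CTgraph m) Tr φ) (hbig : ∀ t, inSpan Tr φ t → k ≤ (X t).card)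
    (hdesc : ∀ t : CTVert m, t.1.length + a ≤ m →
      ∃ t' : CTVert m, t.1 <:+ t'.1 ∧ t'.1.length ≤ t.1.length + a ∧
        ∃ p : Tr.Walk (φ t) (φ t'), p.IsPath ∧ ∃ r ∈ p.support, (X r).card = k) :
    ∃ η : TVert h → T, IsCascade Tr X h k η := by
  have := hTr.connected.nonempty
  choose! D hsuffix hlength p hp r hr hcard using hdesc
  let S : CascadeFrame h m := .ofDescendants hm hsuffix hlength
  have length_top {σ : List Bool} (hσ : σ.length ≤ h) : (S.top σ).1.length + a ≤ m :=
    CascadeFrame.length_segmentTop_add_le hm hlength hσ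
  have hbetween (σ : List Bool) (hσ : σ.length ≤ h) :
      Between Tr (φ (S.top σ)) (r (S.top σ)) (φ (S.bot σ)) :=
    (between_iff_exists_isPath hTr).2 ⟨_, hp _ (length_top hσ), hr _ (length_top hσ)⟩
  have hφ' := (isHomeoEmb_iff_isLocalEmbedding hTr (CTgraph_connected m)).1 hφ
  refine ⟨S.embedding φ fun σ => r (S.top σ), ?_, fun l => hcard _ (length_top l.2), fun t ht => ?_⟩
  · exact (isHomeoEmb_iff_isLocalEmbedding hTr (Tgraph_connected h)).2
      (CascadeFrame.isLocalEmbedding_embedding hTr.connected hφ' hbetween)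
  · exact hbig t (inSpan_of_forall_inSpan hTr (CascadeFrame.inSpan_embedding hTr hbetween) ht)

/-- Lemma 4.3. Let `m = (a+2)h + a`, let `(T, X)` be a
tree-decomposition of `G` and `φ : CT_m ↪ T` a homeomorphic embedding with `|X t| ≥ k` on
its span. If every vertex `t` of `CT_m` at height `l ≤ m - a` has a descendant `t'` at
height `l + a` such that some vertex `r` on the path of `T` between `φ t` and `φ t'` has
`|X r| = k`, then there is a cascade of height `h` and size `k` in `(T, X)`. -/
theorem cascade_of_descendant_condition (h a k : ℕ) (hh : 0 < h) (m : ℕ)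
    (hm : m = (a + 2) * h + a)
    {V T : Type} [Fintype V] [Fintype T] (G : SimpleGraph V)
    (Tr : SimpleGraph T) (X : T → Finset V) (hTD : IsTreeDecomp G Tr X)
    (φ : CTVert m → T) (hφ : IsHomeoEmb (CTgraph m) Tr φ)
    (hbig : ∀ t : T, inSpan Tr φ t → k ≤ (X t).card)
    (hdesc : ∀ t : CTVert m, t.1.length ≤ m - a →
      ∃ t' : CTVert m, t.1 <:+ t'.1 ∧ t'.1.length = t.1.length + a ∧
        ∃ p : Tr.Walk (φ t) (φ t'), p.IsPath ∧ ∃ r ∈ p.support, (X r).card = k) :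
    ∃ η : TVert h → T, IsCascade Tr X h k η := by
  refine cascade_of_descendant_condition_general hTD.1 X hm.ge hφ hbig fun t ht => ?_
  obtain ⟨t', hsuffix, hlength, hpath⟩ := hdesc t (Nat.le_sub_of_add_le ht)
  exact ⟨t', hsuffix, hlength.le, hpath⟩
end

section
/- For any two positive integers h and w, there exists a positive integer p = p(h,w) such that if G is a graph of path-width at least p, then in any tree-decomposition of G of width less than w there exists a cascade of height h (of some size). -/
/-!
Common definitions: minors, widths, connectivity, the specific graphs
`K4`, `K23`, `C32`, `graphA`, the binary trees `CT_h`, the graphs `𝒫_k`, `𝒬_k`,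
the trees `T_h`, homeomorphic embeddings, cascades, and related notions,
following Dang--Thomas, "Minors of two-connected graphs of large path-width".
-/

open SimpleGraph

/-!
Root the tree of the decomposition. If no large binary tree can be embedded among the nodes with
nonempty bags, these nodes have bounded Horton–Strahler rank. Traverse the forest depth-first,
visiting children of lower rank first. When the traversal stands at `t`, the strict ancestors of `t`
with children still to be visited, apart from the parent of `t`, have distinct ranks, so only
boundedly many nodes are active at a time. The unions of the bags of the active nodes form a
path-decomposition of bounded width.

Otherwise, a large binary tree lives on the bags of size at least `s`, at first with `s = 1`. Either
a binary tree of the required height can be found in it whose branchings are separated by bags of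
size exactly `s`, which is a cascade, or some large binary subtree avoids such bags, and `s` can be
increased. As bag sizes are bounded, this stops.
-/

open Relation

section ListLex

variable {α : Type*} [LinearOrder α] {a b : α} {l m : List α}

-- `List.cons_le_cons_iff` is about the `≤` of core lists, not that of the linear order on lists.
lemma list_cons_le_cons_iff : a :: l ≤ b :: m ↔ a < b ∨ a = b ∧ l ≤ m := by
  rw [le_iff_lt_or_eq, le_iff_lt_or_eq, List.cons_lt_cons_iff, List.cons.injEq, or_assoc,
    and_or_left]

lemma list_eq_or_eq_or_exists_prefix_of_le_append_singleton (h : l ≤ m) (h' : m ≤ l ++ [a]) :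
    m = l ∨ m = l ++ [a] ∨ ∃ b < a, l ++ [b] <+: m := by
  induction l generalizing m with
  | nil =>
    cases m with
    | nil => exact .inl rfl
    | cons b m =>
      obtain hba | ⟨rfl, hm⟩ := list_cons_le_cons_iff.1 h'
      · exact .inr (.inr ⟨b, hba, by simp⟩)
      · cases m with
        | nil => exact .inr (.inl rfl)
        | cons c m => exact absurd hm (List.nil_lt_cons c m).not_ge
  | cons x l ih =>
    cases m with
    | nil => exact absurd h (List.nil_lt_cons x l).not_ge
    | cons y m =>
      obtain ⟨rfl, hlm, hml⟩ : x = y ∧ l ≤ m ∧ m ≤ l ++ [a] := by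
        obtain hxy | ⟨rfl, hlm⟩ := list_cons_le_cons_iff.1 h <;>
          obtain hyx | ⟨hxy', hml⟩ := list_cons_le_cons_iff.1 h'
        · exact absurd hxy hyx.asymm
        · exact absurd hxy' hxy.ne'
        · exact absurd hyx (lt_irrefl _)
        · exact ⟨rfl, hlm, hml⟩
      simpa [List.prefix_cons_inj] using ih hlm hml

end ListLex

/-! ### Rooted forests -/

/-- A forest in which every node has at most one parent. The strictly decreasing `depth` only serves
to exclude infinite ascending chains. -/
structure RootedForest (T : Type*) where
  parent : T → Option T
  depth : T → ℕ
  depth_lt : ∀ {x y}, parent x = some y → depth y < depth x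

namespace RootedForest

section Descendants

variable {T : Type*} (F : RootedForest T) {a b c c' v x y : T}

/-- `x` lies in the subtree below `a`; this includes `x = a`. -/
def Desc (x a : T) : Prop := ReflTransGen (fun x y => F.parent x = some y) x a

/-- `x` lies in the subtree below `a` and `x ≠ a`. -/
def StrictDesc (x a : T) : Prop := TransGen (fun x y => F.parent x = some y) x a

variable {F}

@[refl] lemma Desc.refl (a : T) : F.Desc a a := ReflTransGen.refl

lemma Desc.of_parent (h : F.parent x = some y) : F.Desc x y := ReflTransGen.single h

@[trans] lemma Desc.trans (h : F.Desc x y) (h' : F.Desc y a) : F.Desc x a :=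
  ReflTransGen.trans h h'

lemma StrictDesc.of_parent (h : F.parent x = some y) : F.StrictDesc x y := TransGen.single h

lemma StrictDesc.desc (h : F.StrictDesc x a) : F.Desc x a := h.to_reflTransGen

lemma StrictDesc.trans_desc (h : F.StrictDesc x y) (h' : F.Desc y a) : F.StrictDesc x a :=
  TransGen.trans_left h h'

lemma Desc.trans_strictDesc (h : F.Desc x y) (h' : F.StrictDesc y a) : F.StrictDesc x a :=
  TransGen.trans_right h h'

lemma Desc.eq_or_strictDesc (h : F.Desc x a) : x = a ∨ F.StrictDesc x a :=
  (reflTransGen_iff_eq_or_transGen.1 h).imp_left Eq.symm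

lemma StrictDesc.exists_parent (h : F.StrictDesc x a) : ∃ y, F.parent x = some y ∧ F.Desc y a :=
  TransGen.head'_iff.1 h

lemma StrictDesc.exists_child (h : F.StrictDesc x a) : ∃ c, F.Desc x c ∧ F.parent c = some a :=
  TransGen.tail'_iff.1 h

lemma StrictDesc.depth_lt (h : F.StrictDesc x a) : F.depth a < F.depth x := by
  induction h with
  | single h => exact F.depth_lt h
  | tail _ h ih => exact (F.depth_lt h).trans ih

lemma StrictDesc.not_desc (h : F.StrictDesc x a) : ¬ F.Desc a x := fun h' =>
  (h'.trans_strictDesc h).depth_lt.false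

lemma Desc.antisymm (h : F.Desc a b) (h' : F.Desc b a) : a = b :=
  h.eq_or_strictDesc.resolve_right fun hs => hs.not_desc h'

lemma Desc.total (ha : F.Desc x a) (hb : F.Desc x b) : F.Desc a b ∨ F.Desc b a :=
  ReflTransGen.total_of_right_unique
    (fun _ _ _ h h' => Option.some_injective _ (h.symm.trans h')) ha hb

lemma Desc.siblings_eq (hc : F.Desc x c) (hc' : F.Desc x c') (hv : F.parent c = some v)
    (hv' : F.parent c' = some v) : c = c' := by
  have eq_of_desc {c c' : T} (hv : F.parent c = some v) (hv' : F.parent c' = some v)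
      (h : F.Desc c c') : c = c' := by
    refine h.eq_or_strictDesc.resolve_right fun hs => ?_
    obtain ⟨y, hy, hyc'⟩ := hs.exists_parent
    obtain rfl : y = v := Option.some_injective _ (hy.symm.trans hv)
    exact (StrictDesc.of_parent hv').not_desc hyc'
  exact (hc.total hc').elim (eq_of_desc hv hv') fun h => (eq_of_desc hv' hv h).symm

lemma desc_root {r : T} (hr : ∀ x, F.parent x = none → x = r) (a : T) : F.Desc a r := by
  induction hn : F.depth a using Nat.strong_induction_on generalizing a with
  | _ n ih =>
    cases hp : F.parent a with
    | none => rw [hr a hp]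
    | some p => exact (Desc.of_parent hp).trans (ih _ (hn ▸ F.depth_lt hp) p rfl)

end Descendants

section Restrict

variable {T : Type*} (F : RootedForest T) (P Q : Set T) {x y a : T}

open Classical in
/-- The forest obtained by deleting all nodes outside `P`; a deleted node stays in the type as an
isolated root. -/
noncomputable def restrict : RootedForest T where
  parent x := (F.parent x).filter fun y => x ∈ P ∧ y ∈ P
  depth := F.depth
  depth_lt h := F.depth_lt (Option.filter_eq_some_iff.1 h).1

variable {F P Q}

lemma restrict_parent_eq_some :
    (F.restrict P).parent x = some y ↔ F.parent x = some y ∧ x ∈ P ∧ y ∈ P := by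
  simp only [restrict, Option.filter_eq_some_iff, decide_eq_true_eq]

lemma restrict_restrict : (F.restrict P).restrict Q = F.restrict (P ∩ Q) := by
  have hparent : ((F.restrict P).restrict Q).parent = (F.restrict (P ∩ Q)).parent := by
    funext x
    ext y
    simp only [restrict_parent_eq_some, Set.mem_inter_iff]
    tauto
  simpa [restrict] using hparent

lemma Desc.mem_of_restrict (h : (F.restrict P).Desc x a) (ha : a ∈ P) : x ∈ P := by
  obtain rfl | hs := h.eq_or_strictDesc
  · exact ha
  · obtain ⟨y, hy, -⟩ := hs.exists_parent
    exact (restrict_parent_eq_some.1 hy).2.1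

end Restrict

section Binary

variable {T : Type*} (F : RootedForest T) {v x : T} {k n : ℕ}

/-- A subdivision of the complete binary tree of height `k` hangs below `v`. Its top branch node
need not be `v` itself. -/
inductive HasBinary : ℕ → T → Prop
  | leaf (v : T) : HasBinary 0 v
  | lift {k : ℕ} {c v : T} : F.parent c = some v → HasBinary k c → HasBinary k v
  | branch {k : ℕ} {c c' v : T} : F.parent c = some v → F.parent c' = some v → c ≠ c' →
      HasBinary k c → HasBinary k c' → HasBinary (k + 1) v

variable {F}

lemma HasBinary.of_desc (h : F.HasBinary k x) (hxv : F.Desc x v) : F.HasBinary k v := by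
  induction hxv with
  | refl => exact h
  | tail _ hp ih => exact .lift hp ih

lemma HasBinary.exists_children (h : F.HasBinary (k + 1) v) :
    ∃ m c c', F.Desc m v ∧ F.parent c = some m ∧ F.parent c' = some m ∧ c ≠ c' ∧
      F.HasBinary k c ∧ F.HasBinary k c' := by
  generalize hn : k + 1 = n at h
  induction h with
  | leaf => omega
  | lift hp _ ih =>
    obtain ⟨m, c, c', hm, h⟩ := ih hn
    exact ⟨m, c, c', hm.trans (.of_parent hp), h⟩
  | branch hc hc' hne h h' =>
    obtain rfl : k = _ := Nat.succ_injective hn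
    exact ⟨_, _, _, .refl _, hc, hc', hne, h, h'⟩

lemma HasBinary.of_succ (h : F.HasBinary (k + 1) v) : F.HasBinary k v := by
  obtain ⟨m, c, c', hm, hc, -, -, h, -⟩ := h.exists_children
  exact h.of_desc (.trans (.of_parent hc) hm)

lemma HasBinary.mono (h : F.HasBinary n v) (hk : k ≤ n) : F.HasBinary k v := by
  induction hk with
  | refl => exact h
  | step _ ih => exact ih h.of_succ

end Binary

/-! ### Horton–Strahler ranks and the depth-first layout -/

section Rank

variable {T : Type*} (F : RootedForest T) {ρ : T → ℕ} {x y : T} {K : ℕ}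

/-- A Horton–Strahler ranking: ranks do not decrease towards the root, and among the children of a
node at most one has the rank of the node itself. -/
structure IsRank (ρ : T → ℕ) : Prop where
  le_parent : ∀ {c v}, F.parent c = some v → ρ c ≤ ρ v
  lt_parent : ∀ {c c' v}, F.parent c = some v → F.parent c' = some v → c ≠ c' → ρ c ≤ ρ c' →
    ρ c < ρ v

variable {F}

lemma IsRank.le_of_desc (hρ : F.IsRank ρ) (h : F.Desc x y) : ρ x ≤ ρ y := by
  induction h with
  | refl => rfl
  | tail _ hp ih => exact ih.trans (hρ.le_parent hp)

open Classical in
lemma exists_isRank (hF : ∀ v, ¬ F.HasBinary K v) : ∃ ρ, F.IsRank ρ ∧ ∀ v, ρ v < K := by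
  let ρ v := Nat.findGreatest (F.HasBinary · v) K
  have hspec v : F.HasBinary (ρ v) v :=
    Nat.findGreatest_spec (P := (F.HasBinary · v)) (Nat.zero_le K) (.leaf v)
  have hlt v : ρ v < K :=
    (Nat.findGreatest_le K).lt_of_ne fun h => hF v (h ▸ hspec v)
  have le_rank {k v} (h : F.HasBinary k v) : k ≤ ρ v :=
    Nat.le_findGreatest (not_lt.1 fun hk => hF v (h.mono hk.le)) h
  exact ⟨ρ, ⟨fun hp => le_rank (.lift hp (hspec _)), fun hp hp' hne hle =>
    le_rank (.branch hp hp' hne (hspec _) ((hspec _).mono hle))⟩, hlt⟩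

end Rank

section Branch

variable {T : Type*} (F : RootedForest T) {b c t v : T} {l : List T}

/-- The list of nodes on the path from the root above `t` down to `t`. -/
def branch (t : T) : List T :=
  match _h : F.parent t with
  | none => [t]
  | some p => branch p ++ [t]
termination_by F.depth t
decreasing_by exact F.depth_lt ‹_›

variable {F}

lemma branch_of_parent_eq_none (h : F.parent t = none) : F.branch t = [t] := by
  rw [branch]
  split <;> simp_all

lemma branch_of_parent_eq_some (h : F.parent c = some v) : F.branch c = F.branch v ++ [c] := by
  rw [branch]
  split <;> simp_all

lemma exists_branch_eq_append (t : T) : ∃ l, F.branch t = l ++ [t] := by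
  cases h : F.parent t with
  | none => exact ⟨[], branch_of_parent_eq_none h⟩
  | some p => exact ⟨_, branch_of_parent_eq_some h⟩

lemma branch_injective : Function.Injective F.branch := by
  intro a b h
  obtain ⟨l, hl⟩ := exists_branch_eq_append (F := F) a
  obtain ⟨m, hm⟩ := exists_branch_eq_append (F := F) b
  exact (List.append_singleton_inj.1 (hl.symm.trans (h.trans hm))).2

lemma parent_of_branch_eq_append (h : F.branch c = F.branch v ++ [c]) : F.parent c = some v := by
  cases hc : F.parent c with
  | none =>
    obtain ⟨l, hl⟩ := exists_branch_eq_append (F := F) v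
    rw [branch_of_parent_eq_none hc, ← List.nil_append [c], hl] at h
    simpa using List.append_cancel_right h
  | some p =>
    rw [branch_of_parent_eq_some hc] at h
    rw [branch_injective (List.append_cancel_right h)]

lemma branch_eq_and_desc_of_prefix (h : l ++ [b] <+: F.branch t) :
    F.branch b = l ++ [b] ∧ F.Desc t b := by
  induction hn : F.depth t using Nat.strong_induction_on generalizing t with
  | _ n ih =>
    have of_eq (he : l ++ [b] = F.branch t) : F.branch b = l ++ [b] ∧ F.Desc t b := by
      obtain ⟨m, hm⟩ := exists_branch_eq_append (F := F) t
      obtain rfl := (List.append_singleton_inj.1 (he.trans hm)).2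
      exact ⟨he.symm, .refl _⟩
    cases hp : F.parent t with
    | none =>
      rw [branch_of_parent_eq_none hp, ← List.nil_append [t], List.prefix_concat_iff] at h
      exact h.elim (fun he => of_eq (he.trans (branch_of_parent_eq_none hp).symm)) (by simp)
    | some p =>
      rw [branch_of_parent_eq_some hp, List.prefix_concat_iff] at h
      obtain he | h := h
      · exact of_eq (he.trans (branch_of_parent_eq_some hp).symm)
      · obtain ⟨hb, hd⟩ := ih _ (hn ▸ F.depth_lt hp) h rfl
        exact ⟨hb, (Desc.of_parent hp).trans hd⟩

end Branch

section LightAncestors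

variable {T : Type*} {F : RootedForest T} {ρ : T → ℕ} {K : ℕ} {c t u v : T}

lemma IsRank.lt_of_strictDesc (hρ : F.IsRank ρ) (hu : F.StrictDesc u v) (htu : F.Desc t u)
    (hc : F.parent c = some v) (htc : F.Desc t c) (hlt : ρ c < ρ v) : ρ u < ρ v := by
  obtain ⟨d, hd, hdv⟩ := hu.exists_child
  obtain rfl : d = c := (htu.trans hd).siblings_eq htc hdv hc
  exact (hρ.le_of_desc hd).trans_lt hlt

lemma IsRank.encard_lightAncestors_le (hρ : F.IsRank ρ) (hK : ∀ v, ρ v < K) (t : T) :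
    {u | ∃ c, F.parent c = some u ∧ F.Desc t c ∧ ρ c < ρ u}.encard ≤ K := by
  have hinj : Set.InjOn ρ {u | ∃ c, F.parent c = some u ∧ F.Desc t c ∧ ρ c < ρ u} := by
    rintro u ⟨c, hc, htc, hlt⟩ u' ⟨c', hc', htc', hlt'⟩ he
    have htu := htc.trans (.of_parent hc)
    have htu' := htc'.trans (.of_parent hc')
    obtain h | h := htu.total htu'
    · exact h.eq_or_strictDesc.resolve_right fun h =>
        (hρ.lt_of_strictDesc h htu hc' htc' hlt').ne he
    · exact (h.eq_or_strictDesc.resolve_right fun h =>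
        (hρ.lt_of_strictDesc h htu' hc htc hlt).ne he.symm).symm
  calc _ ≤ (Set.Iio K).encard := Set.encard_le_encard_of_injOn (fun u _ => hK u) hinj
    _ = K := by simp [← Finset.coe_Iio]

end LightAncestors

section Layout

variable {T : Type*} [LinearOrder T] (F : RootedForest T) {a b t u : T}

/-- The nodes still relevant when the traversal of the forest in lexicographic order of branches
stands at `t`: those `u` at or before `t` that are `t` itself or have a child at or after `t`. -/
def activeAt (t : T) : Set T :=
  {u | F.branch u ≤ F.branch t ∧ ∃ c, (c = u ∨ F.parent c = some u) ∧ F.branch t ≤ F.branch c}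

variable {F}

lemma eq_or_parent_or_exists_lt_of_mem_activeAt (h : u ∈ F.activeAt t) :
    u = t ∨ F.parent t = some u ∨
      ∃ c c', F.parent c = some u ∧ F.parent c' = some u ∧ c' < c ∧ F.Desc t c' := by
  obtain ⟨hut, c, rfl | hc, htc⟩ := h
  · exact .inl (branch_injective (hut.antisymm htc))
  rw [branch_of_parent_eq_some hc] at htc
  obtain h | h | ⟨c', hlt, h⟩ := list_eq_or_eq_or_exists_prefix_of_le_append_singleton hut htc
  · exact .inl (branch_injective h.symm)
  · rw [← branch_of_parent_eq_some hc] at h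
    exact .inr (.inl (branch_injective h ▸ hc))
  · obtain ⟨hc', hd⟩ := branch_eq_and_desc_of_prefix h
    exact .inr (.inr ⟨c, c', hc, parent_of_branch_eq_append hc', hlt, hd⟩)

lemma IsRank.encard_activeAt_le {ρ : T → ℕ} {K : ℕ} (hρ : F.IsRank ρ) (hK : ∀ v, ρ v < K)
    (hmono : Monotone ρ) (t : T) : (F.activeAt t).encard ≤ K + 2 := by
  have hsub : F.activeAt t ⊆ insert t {u | F.parent t = some u} ∪
      {u | ∃ c, F.parent c = some u ∧ F.Desc t c ∧ ρ c < ρ u} := by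
    intro u hu
    obtain rfl | h | ⟨c, c', hc, hc', hlt, hd⟩ := eq_or_parent_or_exists_lt_of_mem_activeAt hu
    · simp
    · simp [h]
    · exact .inr ⟨c', hc', hd, hρ.lt_parent hc' hc hlt.ne (hmono hlt.le)⟩
  have hparent : {u | F.parent t = some u}.encard ≤ 1 :=
    Set.encard_le_one_iff.2 fun _ _ h h' => Option.some_injective _ (h.symm.trans h')
  calc (F.activeAt t).encard ≤ _ := Set.encard_le_encard hsub
    _ ≤ (insert t {u | F.parent t = some u}).encard + _ := Set.encard_union_le _ _
    _ ≤ (1 + 1) + K := by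
        gcongr
        · exact (Set.encard_insert_le _ _).trans (by gcongr)
        · exact hρ.encard_lightAncestors_le hK t
    _ = K + 2 := by rw [add_comm, one_add_one_eq_two]

lemma exists_mem_support_mem_activeAt {Tr : SimpleGraph T} (p : Tr.Walk a b)
    (hadj : ∀ x ∈ p.support, ∀ y ∈ p.support, Tr.Adj x y →
      F.parent x = some y ∨ F.parent y = some x)
    (hat : F.branch a ≤ F.branch t)
    (htb : ∃ c, (c = b ∨ F.parent c = some b) ∧ F.branch t ≤ F.branch c) :
    ∃ u ∈ p.support, u ∈ F.activeAt t := by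
  induction p with
  | nil => exact ⟨_, by simp, hat, htb⟩
  | @cons a d b h p ih =>
    simp only [Walk.support_cons, List.mem_cons] at hadj ⊢
    obtain hdt | htd := le_total (F.branch d) (F.branch t)
    · obtain ⟨u, hu, hut⟩ := ih (fun x hx y hy => hadj x (.inr hx) y (.inr hy)) hdt htb
      exact ⟨u, .inr hu, hut⟩
    · obtain hda | had := (hadj a (.inl rfl) d (.inr p.start_mem_support) h).symm
      · exact ⟨a, .inl rfl, hat, d, .inr hda, htd⟩
      · have hda : F.branch d ≤ F.branch a := by
          rw [branch_of_parent_eq_some had]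
          exact not_lt.1 (List.prefix_append _ _).le
        exact ⟨a, .inl rfl, hat, a, .inl rfl, htd.trans hda⟩

end Layout

end RootedForest

/-! ### Path-width of rooted decompositions -/

section PathWidth

lemma pathwidth_le_of_key {V ι α : Type*} [Fintype V] [LinearOrder α] {G : SimpleGraph V}
    {key : ι → α} (hkey : Function.Injective key) {B : ι → Finset V} {k : ℕ}
    (hvert : ∀ v, ∃ i, v ∈ B i) (hedge : ∀ u v, G.Adj u v → ∃ i, u ∈ B i ∧ v ∈ B i)
    (hinterval : ∀ i j l, key i ≤ key j → key j ≤ key l → ∀ v, v ∈ B i → v ∈ B l → v ∈ B j)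
    (hcard : ∀ i, (B i).card ≤ k + 1) : pathwidth G ≤ k := by
  classical
  let := LinearOrder.lift' key hkey
  have hpair (e : V × V) : ∃ i, e.1 ∈ B i ∧ (G.Adj e.1 e.2 → e.2 ∈ B i) := by
    by_cases he : G.Adj e.1 e.2
    · exact (hedge _ _ he).imp fun i hi => ⟨hi.1, fun _ => hi.2⟩
    · exact (hvert e.1).imp fun i hi => ⟨hi, fun h => absurd h he⟩
  choose idx hidx using hpair
  let I := Finset.univ.image idx
  have hI (e) : ∃ j, I.orderEmbOfFin rfl j = idx e := by
    rw [← Set.mem_range, Finset.range_orderEmbOfFin]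
    simp [I]
  refine Nat.sInf_le ⟨I.card, B ∘ I.orderEmbOfFin rfl, ⟨fun v => ?_, fun u v huv => ?_, ?_⟩,
    fun i => hcard _⟩
  · obtain ⟨j, hj⟩ := hI (v, v)
    exact ⟨j, by simpa [hj] using (hidx (v, v)).1⟩
  · obtain ⟨j, hj⟩ := hI (u, v)
    exact ⟨j, by simpa [hj] using ⟨(hidx (u, v)).1, (hidx (u, v)).2 huv⟩⟩
  · exact fun i j l hij hjl v => hinterval _ _ _ ((I.orderEmbOfFin rfl).monotone hij)
      ((I.orderEmbOfFin rfl).monotone hjl) v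

lemma exists_linearOrder_monotone {T α : Type*} [LinearOrder α] (ρ : T → α) :
    ∃ _ : LinearOrder T, Monotone ρ := by
  let : LinearOrder T := IsWellOrder.linearOrder WellOrderingRel
  have hinj : Function.Injective fun t => toLex (ρ t, t) := fun a b h =>
    congrArg Prod.snd (toLex.injective h)
  exact ⟨LinearOrder.lift' _ hinj, fun a b h => Prod.Lex.monotone_fst _ _ h⟩

namespace RootedForest

lemma pathwidth_le_of_not_hasBinary {V T : Type*} [Fintype V] {G : SimpleGraph V}
    {Tr : SimpleGraph T} {X : T → Finset V} (hX : IsTreeDecomp G Tr X) {w : ℕ}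
    (hw : ∀ t, (X t).card ≤ w) {F : RootedForest T}
    (hF : ∀ x y, Tr.Adj x y → (X x).Nonempty → (X y).Nonempty →
      F.parent x = some y ∨ F.parent y = some x)
    {K : ℕ} (hK : ∀ v, ¬ F.HasBinary K v) : pathwidth G ≤ (K + 2) * w := by
  classical
  obtain ⟨ρ, hρ, hρK⟩ := exists_isRank hK
  obtain ⟨_, hmono⟩ := exists_linearOrder_monotone ρ
  obtain ⟨hTr, hvert, hedge, hpath⟩ := hX
  have henc := hρ.encard_activeAt_le hρK hmono
  have hfin t : (F.activeAt t).Finite := Set.finite_of_encard_le_coe (k := K + 2) (henc t)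
  have hself t : t ∈ F.activeAt t := ⟨le_rfl, t, .inl rfl, le_rfl⟩
  let B t : Finset V := (hfin t).toFinset.biUnion X
  have hB {t v} : v ∈ B t ↔ ∃ u ∈ F.activeAt t, v ∈ X u := by simp [B]
  refine pathwidth_le_of_key (B := B) (branch_injective (F := F)) (fun v => ?_)
    (fun u v huv => ?_) ?_ fun t => ?_
  · exact (hvert v).imp fun t ht => hB.2 ⟨t, hself t, ht⟩
  · exact (hedge u v huv).imp fun t ht => ⟨hB.2 ⟨t, hself t, ht.1⟩, hB.2 ⟨t, hself t, ht.2⟩⟩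
  · intro i j l hij hjl v hvi hvl
    obtain ⟨a, ⟨hai, -⟩, hva⟩ := hB.1 hvi
    obtain ⟨b, ⟨-, c, hcb, hlc⟩, hvb⟩ := hB.1 hvl
    obtain ⟨p, hp⟩ := hTr.connected.exists_isPath a b
    have hv x (hx : x ∈ p.support) : v ∈ X x := hpath a x b p hp hx v hva hvb
    obtain ⟨u, hu, huj⟩ := exists_mem_support_mem_activeAt p
      (fun x hx y hy h => hF x y h ⟨v, hv x hx⟩ ⟨v, hv y hy⟩) (hai.trans hij)
      ⟨c, hcb, hjl.trans hlc⟩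
    exact hB.2 ⟨u, huj, hv u hu⟩
  · have hcard : (hfin t).toFinset.card ≤ K + 2 := by
      have := henc t
      rw [(hfin t).encard_eq_coe_toFinset_card] at this
      exact_mod_cast this
    calc (B t).card ≤ (hfin t).toFinset.card * w :=
          Finset.card_biUnion_le_card_mul _ _ _ fun u _ => hw u
      _ ≤ (K + 2) * w + 1 := (Nat.mul_le_mul_right w hcard).trans (Nat.le_succ _)

end RootedForest

end PathWidth

section Rooting

variable {T : Type*} {Tr : SimpleGraph T} {r x y z : T}

lemma eq_of_adj_of_dist_lt (hT : Tr.IsTree) (hy : Tr.Adj x y) (hz : Tr.Adj x z)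
    (hyr : Tr.dist y r < Tr.dist x r) (hzr : Tr.dist z r < Tr.dist x r) : y = z := by
  have exists_path {y} (hy : Tr.Adj x y) (hyr : Tr.dist y r < Tr.dist x r) :
      ∃ p : Tr.Walk y r, (Walk.cons hy p).IsPath := by
    obtain ⟨p, -, hp⟩ := hT.connected.exists_path_of_dist y r
    refine ⟨p, Walk.isPath_of_length_eq_dist _ (le_antisymm ?_ (dist_le _))⟩
    rw [Walk.length_cons, hp]
    exact hyr
  obtain ⟨p, hp⟩ := exists_path hy hyr
  obtain ⟨q, hq⟩ := exists_path hz hzr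
  simpa using congrArg (·.1.snd)
    ((hT.isAcyclic.subsingleton_path x r).elim ⟨_, hp⟩ ⟨_, hq⟩)

open Classical in
lemma RootedForest.exists_adj_iff_parent (hT : Tr.IsTree) : ∃ F : RootedForest T,
    ∀ x y, Tr.Adj x y ↔ F.parent x = some y ∨ F.parent y = some x := by
  obtain ⟨r⟩ := hT.connected.nonempty
  let towardsRoot x y := Tr.Adj x y ∧ Tr.dist y r < Tr.dist x r
  let parent x := if h : ∃ y, towardsRoot x y then some h.choose else none
  have hparent {x y} : parent x = some y ↔ towardsRoot x y := by
    by_cases h : ∃ y, towardsRoot x y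
    · simp only [parent, dif_pos h, Option.some.injEq]
      refine ⟨fun hy => hy ▸ h.choose_spec, fun hy => ?_⟩
      exact eq_of_adj_of_dist_lt hT h.choose_spec.1 hy.1 h.choose_spec.2 hy.2
    · simp only [parent, dif_neg h, reduceCtorEq, false_iff]
      exact fun hy => h ⟨y, hy⟩
  refine ⟨⟨parent, (Tr.dist · r), fun h => (hparent.1 h).2⟩, fun x y => ?_⟩
  simp only [hparent, towardsRoot, Tr.adj_comm y x, ← and_or_left, iff_self_and]
  intro h
  have := hT.dist_eq_dist_add_one_of_adj r h
  rw [dist_comm, dist_comm (u := r) (v := y)] at this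
  omega

end Rooting

/-! ### Marked binary trees -/

namespace RootedForest

section Marked

variable {T : Type*} (F : RootedForest T) {Z : Set T} {k n s w M : ℕ} {v : T}

/-- Below `v` there is a complete binary tree of height `k` whose branch nodes alternate with nodes
of `Z`: a node `z` of `Z`, and if `0 < k` a branch node `m` strictly below `z` together with two
children of `m` below each of which the same pattern of height `k - 1` is found. -/
inductive HasMarkedBinary (Z : Set T) : ℕ → T → Prop
  | leaf {z v : T} : z ∈ Z → F.Desc z v → HasMarkedBinary Z 0 v
  | branch {k : ℕ} {z v m c c' : T} : z ∈ Z → F.Desc z v → F.StrictDesc m z →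
      F.parent c = some m → F.parent c' = some m → c ≠ c' →
      HasMarkedBinary Z k c → HasMarkedBinary Z k c' → HasMarkedBinary Z (k + 1) v

/-- A height of binary subtrees that forces a marked binary tree of height `k` when marks are taken
from `n` levels. -/
def markedBound (k : ℕ) : ℕ → ℕ
  | 0 => 1
  | n + 1 => k * (markedBound k n + 2) + markedBound k n

variable {F}

lemma HasBinary.restrict_compl_or (h : F.HasBinary (n + M) v) :
    (F.restrict Zᶜ).HasBinary M v ∨ ∃ z ∈ Z, F.Desc z v ∧ F.HasBinary n z := by
  have edge_or {c v} (hc : F.parent c = some v) (h : F.HasBinary n c) :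
      (F.restrict Zᶜ).parent c = some v ∨ ∃ z ∈ Z, F.Desc z v ∧ F.HasBinary n z := by
    by_cases hcZ : c ∈ Z
    · exact .inr ⟨c, hcZ, .of_parent hc, h⟩
    by_cases hvZ : v ∈ Z
    · exact .inr ⟨v, hvZ, .refl v, .lift hc h⟩
    exact .inl (restrict_parent_eq_some.2 ⟨hc, hcZ, hvZ⟩)
  have lift_right {c v} (hc : F.parent c = some v) : (∃ z ∈ Z, F.Desc z c ∧ F.HasBinary n z) →
      ∃ z ∈ Z, F.Desc z v ∧ F.HasBinary n z :=
    fun ⟨z, hz, hzc, h⟩ => ⟨z, hz, hzc.trans (.of_parent hc), h⟩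
  generalize hN : n + M = N at h
  induction h generalizing M with
  | leaf v =>
    obtain ⟨-, rfl⟩ := Nat.add_eq_zero_iff.1 hN
    exact .inl (.leaf v)
  | lift hc h ih =>
    obtain hc' | hr := edge_or hc (h.mono (by omega))
    · exact (ih hN).imp (.lift hc') (lift_right hc)
    · exact .inr hr
  | @branch N c c' v hc hc' hne h h' ih ih' =>
    obtain _ | M := M
    · exact .inl (.leaf v)
    obtain hN : n + M = N := by omega
    obtain hd | hr := edge_or hc (h.mono (by omega))
    · obtain hd' | hr := edge_or hc' (h'.mono (by omega))
      · obtain hM | hr := ih hN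
        · exact (ih' hN).imp (.branch hd hd' hne hM) (lift_right hc')
        · exact .inr (lift_right hc hr)
      · exact .inr hr
    · exact .inr hr

lemma HasBinary.exists_strictDesc_children (h : F.HasBinary (k + 2) v) :
    ∃ m c c', F.StrictDesc m v ∧ F.parent c = some m ∧ F.parent c' = some m ∧ c ≠ c' ∧
      F.HasBinary k c ∧ F.HasBinary k c' := by
  obtain ⟨m₀, c₀, -, hm₀, hc₀, -, -, h₀, -⟩ := h.exists_children
  obtain ⟨m, c, c', hm, hc⟩ := h₀.exists_children
  exact ⟨m, c, c', hm.trans_strictDesc ((StrictDesc.of_parent hc₀).trans_desc hm₀), hc⟩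

lemma HasBinary.restrict_compl_or_hasMarkedBinary (h : F.HasBinary (k * (M + 2) + M) v) :
    (∃ u, (F.restrict Zᶜ).HasBinary M u) ∨ F.HasMarkedBinary Z k v := by
  induction k generalizing v with
  | zero =>
    rw [zero_mul] at h
    exact h.restrict_compl_or.imp (⟨v, ·⟩) fun ⟨z, hz, hzv, _⟩ => .leaf hz hzv
  | succ k ih =>
    rw [show (k + 1) * (M + 2) + M = k * (M + 2) + M + 2 + M by ring] at h
    obtain hM | ⟨z, hz, hzv, h⟩ := h.restrict_compl_or (Z := Z)
    · exact .inl ⟨v, hM⟩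
    obtain ⟨m, c, c', hm, hc, hc', hne, h, h'⟩ := h.exists_strictDesc_children
    obtain hM | hk := ih h
    · exact .inl hM
    exact (ih h').imp_right (.branch hz hzv hm hc hc' hne hk)

lemma restrict_levels_compl (l : T → ℕ) :
    (F.restrict {t | s ≤ l t}).restrict {t | l t = s}ᶜ = F.restrict {t | s + 1 ≤ l t} := by
  rw [restrict_restrict]
  congr 1
  ext t
  simp only [Set.mem_inter_iff, Set.mem_ofPred_eq, Set.mem_compl_iff]
  omega

lemma exists_hasMarkedBinary_level {l : T → ℕ} (hl : ∀ t, l t ≤ w) (hn : w < s + n)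
    (h : (F.restrict {t | s ≤ l t}).HasBinary (markedBound k n) v) :
    ∃ s' ≥ s, ∃ u, (F.restrict {t | s' ≤ l t}).HasMarkedBinary {t | l t = s'} k u := by
  induction n generalizing s v with
  | zero =>
    obtain ⟨m, c, -, -, hc, -⟩ := h.exists_children
    have hsc : s ≤ l c := (restrict_parent_eq_some.1 hc).2.1
    have := hl c
    omega
  | succ n ih =>
    obtain ⟨u, hu⟩ | h := h.restrict_compl_or_hasMarkedBinary (Z := {t | l t = s})
    · rw [restrict_levels_compl] at hu
      obtain ⟨s', hs', h⟩ := ih (by omega) hu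
      exact ⟨s', by omega, h⟩
    · exact ⟨s, le_rfl, v, h⟩

end Marked

end RootedForest

/-! ### Homeomorphic embeddings of rooted trees -/

section Paths

variable {B : Type*} {TB : SimpleGraph B} {u v : B}

lemma eq_bypass_of_isPath [DecidableEq B] (hTB : TB.IsAcyclic) {q : TB.Walk u v} (hq : q.IsPath)
    (p : TB.Walk u v) : q = p.bypass :=
  congrArg Subtype.val ((hTB.subsingleton_path u v).elim ⟨q, hq⟩ ⟨_, p.bypass_isPath⟩)

namespace RootedForest

variable {F : RootedForest B} {a x y z : B}

lemma Desc.exists_walk (hF : ∀ x y, F.parent x = some y → TB.Adj x y) (h : F.Desc x a) :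
    ∃ p : TB.Walk x a, (∀ v ∈ p.support, F.Desc v a) ∧
      ∀ e ∈ p.edges, ∃ y z, e = s(y, z) ∧ F.parent y = some z ∧ F.Desc x y ∧ F.Desc z a := by
  induction h using ReflTransGen.head_induction_on with
  | refl => exact ⟨.nil, by simp [Desc.refl], by simp⟩
  | @head x y hxy hya ih =>
    obtain ⟨p, hsupport, hedges⟩ := ih
    refine ⟨.cons (hF x y hxy) p, ?_, ?_⟩
    · simpa using ⟨(Desc.of_parent hxy).trans hya, hsupport⟩
    · intro e he
      obtain rfl | he := List.mem_cons.1 he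
      · exact ⟨x, y, rfl, hxy, .refl x, hya⟩
      · obtain ⟨u, v, rfl, huv, hyu, hva⟩ := hedges e he
        exact ⟨u, v, rfl, huv, (Desc.of_parent hxy).trans hyu, hva⟩

lemma Desc.exists_of_mem_edges (hTB : TB.IsAcyclic) (hF : ∀ x y, F.parent x = some y → TB.Adj x y)
    (h : F.Desc x a) {q : TB.Walk x a} (hq : q.IsPath) {e : Sym2 B} (he : e ∈ q.edges) :
    ∃ y z, e = s(y, z) ∧ F.parent y = some z ∧ F.Desc x y ∧ F.Desc z a := by
  classical
  obtain ⟨p, -, hedges⟩ := h.exists_walk hF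
  rw [eq_bypass_of_isPath hTB hq p] at he
  exact hedges e (p.edges_bypass_subset_edges he)

lemma Desc.of_mem_support (hTB : TB.IsAcyclic) (hF : ∀ x y, F.parent x = some y → TB.Adj x y)
    (hx : F.Desc x a) (hy : F.Desc y a) {q : TB.Walk x y} (hq : q.IsPath) (hv : v ∈ q.support) :
    F.Desc v a := by
  classical
  obtain ⟨p, hp, -⟩ := hx.exists_walk hF
  obtain ⟨p', hp', -⟩ := hy.exists_walk hF
  rw [eq_bypass_of_isPath hTB hq (p.append p'.reverse)] at hv
  have hv := Walk.support_bypass_subset_support _ hv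
  rw [Walk.mem_support_append_iff, Walk.support_reverse, List.mem_reverse] at hv
  exact hv.elim (hp v) (hp' v)

lemma eq_of_sym2_eq {y' z' : B} (h : F.parent y = some z) (h' : F.parent y' = some z')
    (he : s(y, z) = s(y', z')) : y = y' := by
  obtain ⟨hy, -⟩ | ⟨rfl, rfl⟩ := Sym2.eq_iff.1 he
  · exact hy
  · exact absurd (F.depth_lt h) (F.depth_lt h').asymm

section Embedding

variable {A : Type*} {TA : SimpleGraph A} {FA : RootedForest A} {a b r : A} {η : A → B}

/-- A map of forests under which parents become strict ancestors and distinct children of `c` end up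
below distinct children of `η c`. The latter is expressed by saying that their images have no common
ancestor strictly below `η c`. -/
structure IsEmbedding (FA : RootedForest A) (F : RootedForest B) (η : A → B) : Prop where
  strictDesc_of_parent : ∀ {a b}, FA.parent a = some b → F.StrictDesc (η a) (η b)
  not_strictDesc_of_siblings : ∀ {a b c}, FA.parent a = some c → FA.parent b = some c → a ≠ b →
    ∀ {x}, F.Desc (η a) x → F.Desc (η b) x → ¬ F.StrictDesc x (η c)

namespace IsEmbedding

lemma map_desc (hη : FA.IsEmbedding F η) (h : FA.Desc a b) : F.Desc (η a) (η b) := by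
  induction h with
  | refl => rfl
  | tail _ h ih => exact ih.trans (hη.strictDesc_of_parent h).desc

lemma desc_of_map_desc (hη : FA.IsEmbedding F η) (hr : ∀ a, FA.Desc a r)
    (h : F.Desc (η a) (η b)) : FA.Desc a b := by
  induction hr b using ReflTransGen.head_induction_on with
  | refl => exact hr a
  | @head b c hbc _ ih =>
    have hbc' := hη.strictDesc_of_parent hbc
    obtain rfl | hac := (ih (h.trans hbc'.desc)).eq_or_strictDesc
    · exact absurd h hbc'.not_desc
    obtain ⟨d, had, hdc⟩ := hac.exists_child
    obtain rfl | hdb := eq_or_ne d b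
    · exact had
    obtain hdb' | hbd' := (hη.map_desc had).total h
    · exact absurd hbc' (hη.not_strictDesc_of_siblings hdc hbc hdb hdb' (.refl _))
    · exact absurd (hη.strictDesc_of_parent hdc)
        (hη.not_strictDesc_of_siblings hdc hbc hdb (.refl _) hbd')

lemma injective (hη : FA.IsEmbedding F η) (hr : ∀ a, FA.Desc a r) : Function.Injective η := by
  intro a b hab
  have ha : F.Desc (η a) (η b) := hab ▸ Desc.refl _
  have hb : F.Desc (η b) (η a) := hab ▸ Desc.refl _
  exact (hη.desc_of_map_desc hr ha).antisymm (hη.desc_of_map_desc hr hb)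

lemma isHomeoEmb (hη : FA.IsEmbedding F η) (hr : ∀ a, FA.Desc a r) (hTB : TB.IsAcyclic)
    (hF : ∀ x y, F.parent x = some y → TB.Adj x y)
    (hTA : ∀ a b, TA.Adj a b → FA.parent a = some b ∨ FA.parent b = some a) :
    IsHomeoEmb TA TB η := by
  have mem_edges_up {a b} (h : FA.parent a = some b) {p : TB.Walk (η a) (η b)} (hp : p.IsPath)
      {e : Sym2 B} (he : e ∈ p.edges) :
      ∃ y z, e = s(y, z) ∧ F.parent y = some z ∧ F.Desc (η a) y ∧ F.Desc z (η b) :=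
    (hη.strictDesc_of_parent h).desc.exists_of_mem_edges hTB hF hp he
  have mem_edges_down {a b} (h : FA.parent b = some a) {p : TB.Walk (η a) (η b)} (hp : p.IsPath)
      {e : Sym2 B} (he : e ∈ p.edges) :
      ∃ y z, e = s(y, z) ∧ F.parent y = some z ∧ F.Desc (η b) y ∧ F.Desc z (η a) :=
    mem_edges_up h hp.reverse (by simpa using he)
  have not_mem_up_down {t t₁ t₂} (h₁ : FA.parent t = some t₁) (h₂ : FA.parent t₂ = some t)
      {p₁ : TB.Walk (η t) (η t₁)} {p₂ : TB.Walk (η t) (η t₂)} (hp₁ : p₁.IsPath) (hp₂ : p₂.IsPath)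
      {e : Sym2 B} (he₁ : e ∈ p₁.edges) (he₂ : e ∈ p₂.edges) : False := by
    obtain ⟨y, z, rfl, hy, hty, -⟩ := mem_edges_up h₁ hp₁ he₁
    obtain ⟨y', z', he, hy', -, hzt⟩ := mem_edges_down h₂ hp₂ he₂
    obtain rfl := eq_of_sym2_eq hy hy' he
    exact ((StrictDesc.of_parent hy').trans_desc hzt).not_desc hty
  refine ⟨hη.injective hr, fun t t₁ t₂ h₁ h₂ hne p₁ p₂ hp₁ hp₂ e he₁ he₂ => ?_⟩
  obtain h₁ | h₁ := hTA t t₁ h₁ <;> obtain h₂ | h₂ := hTA t t₂ h₂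
  · exact hne (Option.some_injective _ (h₁.symm.trans h₂))
  · exact not_mem_up_down h₁ h₂ hp₁ hp₂ he₁ he₂
  · exact not_mem_up_down h₂ h₁ hp₂ hp₁ he₂ he₁
  · obtain ⟨y, z, rfl, hy, hy₁, hzt⟩ := mem_edges_down h₁ hp₁ he₁
    obtain ⟨y', z', he, hy', hy₂, -⟩ := mem_edges_down h₂ hp₂ he₂
    obtain rfl := eq_of_sym2_eq hy hy' he
    exact hη.not_strictDesc_of_siblings h₁ h₂ hne hy₁ hy₂
      ((StrictDesc.of_parent hy).trans_desc hzt)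

end IsEmbedding

end Embedding

end RootedForest

end Paths

/-! ### Cascades -/

section BinaryTree

variable {h : ℕ}

/-- `T_h` as a forest, rooted at its minor root. -/
def TForest (h : ℕ) : RootedForest (TVert h) where
  parent
    | .inl ⟨[], _⟩ => none
    | .inl ⟨_ :: σ, hσ⟩ => some (.inr ⟨σ, hσ⟩)
    | .inr ⟨σ, hσ⟩ => some (.inl ⟨σ, Nat.le_of_succ_le hσ⟩)
  depth := Sum.elim (2 * ·.1.length) (2 * ·.1.length + 1)
  depth_lt := by
    rintro (⟨_ | ⟨b, σ⟩, hσ⟩ | ⟨σ, hσ⟩) y hy <;> cases hy <;>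
      simp only [Sum.elim_inl, Sum.elim_inr, List.length_cons] <;> omega

lemma tForest_parent_of_adj {a b : TVert h} (hab : (Tgraph h).Adj a b) :
    (TForest h).parent a = some b ∨ (TForest h).parent b = some a := by
  obtain ⟨⟨σ, hσ, he | ⟨c, he⟩⟩, -⟩ := (fromEdgeSet_adj _).1 hab
  · obtain ⟨rfl, rfl⟩ | ⟨rfl, rfl⟩ := Sym2.eq_iff.1 he
    exacts [.inl rfl, .inr rfl]
  · obtain ⟨rfl, rfl⟩ | ⟨rfl, rfl⟩ := Sym2.eq_iff.1 he
    exacts [.inr rfl, .inl rfl]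

lemma tForest_desc_root (a : TVert h) : (TForest h).Desc a (.inl ⟨[], Nat.zero_le h⟩) := by
  refine RootedForest.desc_root ?_ a
  rintro (⟨_ | ⟨b, σ⟩, hσ⟩ | ⟨σ, hσ⟩) hx
  · rfl
  all_goals cases hx

end BinaryTree

namespace RootedForest

variable {T : Type*} {F : RootedForest T} {Z : Set T} {h k : ℕ} {v : T}

/-- An explicit marked binary tree of height `h`. Nodes are addressed by reversed lists of
left/right moves as in `TVert`: `minor σ` is the marked node and `major σ` the branch node at `σ`,
while `top (b :: σ)` is the child of `major σ` on the way to `minor (b :: σ)`. Addresses that are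
too long carry no information. -/
structure MarkedTree (F : RootedForest T) (Z : Set T) (h : ℕ) where
  top : List Bool → T
  minor : List Bool → T
  major : List Bool → T
  minor_mem : ∀ {σ}, σ.length ≤ h → minor σ ∈ Z
  minor_desc : ∀ {σ}, σ.length ≤ h → F.Desc (minor σ) (top σ)
  major_strictDesc : ∀ {σ}, σ.length < h → F.StrictDesc (major σ) (minor σ)
  parent_top : ∀ {σ}, σ.length < h → ∀ b, F.parent (top (b :: σ)) = some (major σ)
  top_injective : ∀ {σ}, σ.length < h → Function.Injective fun b => top (b :: σ)

lemma HasMarkedBinary.exists_children (hv : F.HasMarkedBinary Z k v) :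
    ∃ z m, ∃ c : Bool → T, z ∈ Z ∧ F.Desc z v ∧ (0 < k → F.StrictDesc m z ∧
      (∀ b, F.parent (c b) = some m) ∧ c.Injective ∧ ∀ b, F.HasMarkedBinary Z (k - 1) (c b)) := by
  cases hv with
  | leaf hz hzv => exact ⟨_, v, fun _ => v, hz, hzv, fun hk => absurd hk (lt_irrefl 0)⟩
  | @branch k z _ m c c' hz hzv hm hc hc' hne h h' =>
    refine ⟨z, m, fun b => bif b then c' else c, hz, hzv, fun _ => ⟨hm, ?_, ?_, ?_⟩⟩
    · simp [hc, hc']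
    · simpa [Bool.injective_iff] using hne
    · simp [h, h']

lemma HasMarkedBinary.nonempty_markedTree (hv : F.HasMarkedBinary Z h v) :
    Nonempty (MarkedTree F Z h) := by
  have : Nonempty T := ⟨v⟩
  choose! z m c hz hzv hstep using fun (x : ℕ × T) (hx : F.HasMarkedBinary Z x.1 x.2) =>
    hx.exists_children
  let node (σ : List Bool) : ℕ × T := σ.foldr (fun b x => (x.1 - 1, c x b)) (h, v)
  have hnode_fst σ : (node σ).1 = h - σ.length := by
    induction σ with
    | nil => rfl
    | cons b σ ih => rw [List.length_cons, Nat.sub_add_eq, ← ih]; rfl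
  have hnode {σ : List Bool} (hσ : σ.length ≤ h) :
      F.HasMarkedBinary Z (node σ).1 (node σ).2 := by
    induction σ with
    | nil => exact hv
    | cons b σ ih =>
      have hσ : σ.length < h := hσ
      exact (hstep _ (ih hσ.le) (hnode_fst σ ▸ Nat.sub_pos_of_lt hσ)).2.2.2 b
  have hstep {σ : List Bool} (hσ : σ.length < h) :=
    hstep _ (hnode hσ.le) (hnode_fst σ ▸ Nat.sub_pos_of_lt hσ)
  exact ⟨⟨fun σ => (node σ).2, fun σ => z (node σ), fun σ => m (node σ), fun hσ => hz _ (hnode hσ),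
    fun hσ => hzv _ (hnode hσ), fun hσ => (hstep hσ).1, fun hσ => (hstep hσ).2.1,
    fun hσ => (hstep hσ).2.2.1⟩⟩

namespace MarkedTree

/-- The map from the nodes of `T_h` to those of a marked tree. -/
def toFun (D : MarkedTree F Z h) : TVert h → T :=
  Sum.elim (fun l => D.minor l.1) (fun l => D.major l.1)

lemma isEmbedding (D : MarkedTree F Z h) : (TForest h).IsEmbedding F D.toFun where
  strictDesc_of_parent {a b} hab := by
    obtain ⟨_ | ⟨i, σ⟩, hσ⟩ | ⟨σ, hσ⟩ := a <;> cases hab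
    · exact (D.minor_desc hσ).trans_strictDesc (.of_parent (D.parent_top hσ i))
    · exact D.major_strictDesc hσ
  not_strictDesc_of_siblings {a b c} ha hb hab x hax hbx hxc := by
    obtain ⟨_ | ⟨i, σ⟩, hσ⟩ | ⟨σ, hσ⟩ := a <;> cases ha <;>
      obtain ⟨_ | ⟨j, τ⟩, hτ⟩ | ⟨τ, hτ⟩ := b <;> cases hb
    · obtain ⟨d, hxd, hd⟩ := hxc.exists_child
      have hi : D.top (i :: σ) = d :=
        (D.minor_desc hσ).siblings_eq (hax.trans hxd) (D.parent_top hσ i) hd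
      have hj : D.top (j :: σ) = d :=
        (D.minor_desc hτ).siblings_eq (hbx.trans hxd) (D.parent_top hτ j) hd
      obtain rfl := D.top_injective hσ (hi.trans hj.symm)
      exact hab rfl
    · exact hab rfl

end MarkedTree

lemma exists_isCascade {V : Type*} {Tr : SimpleGraph T} {X : T → Finset V} {s : ℕ}
    (hTr : Tr.IsAcyclic) (hF : ∀ x y, F.parent x = some y → Tr.Adj x y)
    (hv : (F.restrict {t | s ≤ (X t).card}).HasMarkedBinary {t | (X t).card = s} h v) :
    ∃ η, IsCascade Tr X h s η := by
  obtain ⟨D⟩ := hv.nonempty_markedTree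
  have hF' x y (hxy : (F.restrict {t | s ≤ (X t).card}).parent x = some y) : Tr.Adj x y :=
    hF x y (restrict_parent_eq_some.1 hxy).1
  have hdesc a := D.isEmbedding.map_desc (tForest_desc_root a)
  refine ⟨D.toFun, D.isEmbedding.isHomeoEmb tForest_desc_root hTr hF' fun _ _ =>
    tForest_parent_of_adj, fun l => D.minor_mem l.2, ?_⟩
  rintro t ⟨a, b, p, hp, ht⟩
  have hroot : D.toFun (.inl ⟨[], Nat.zero_le h⟩) ∈ {t | s ≤ (X t).card} :=
    (D.minor_mem (σ := []) (Nat.zero_le h)).ge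
  exact ((hdesc a).of_mem_support hTr hF' (hdesc b) hp ht).mem_of_restrict hroot

end RootedForest

theorem cascade_exists_of_large_pathwidth_general (h w : ℕ) :
    ∃ p : ℕ, 0 < p ∧ ∀ (V : Type*) [Fintype V] (G : SimpleGraph V), p ≤ pathwidth G →
      ∀ (T : Type*) (Tr : SimpleGraph T) (X : T → Finset V),
        IsTreeDecomp G Tr X → (∀ t, (X t).card ≤ w) →
          ∃ (s : ℕ) (η : TVert h → T), 0 < s ∧ IsCascade Tr X h s η := by
  let N := RootedForest.markedBound h w
  refine ⟨(N + 2) * w + 1, Nat.succ_pos _, fun V _ G hG T Tr X hX hw => ?_⟩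
  obtain ⟨F, hF⟩ := RootedForest.exists_adj_iff_parent hX.1
  obtain ⟨v, hv⟩ : ∃ v, (F.restrict {t | 1 ≤ (X t).card}).HasBinary N v := by
    by_contra! hN
    refine (RootedForest.pathwidth_le_of_not_hasBinary hX hw (fun x y hxy hx hy => ?_) hN).not_gt hG
    exact ((hF x y).1 hxy).imp
      (fun hp => RootedForest.restrict_parent_eq_some.2 ⟨hp, hx.card_pos, hy.card_pos⟩)
      fun hp => RootedForest.restrict_parent_eq_some.2 ⟨hp, hy.card_pos, hx.card_pos⟩
  obtain ⟨s, hs, u, hu⟩ := RootedForest.exists_hasMarkedBinary_level hw (by omega) hv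
  obtain ⟨η, hη⟩ :=
    RootedForest.exists_isCascade hX.1.isAcyclic (fun x y hp => (hF x y).2 (.inl hp)) hu
  exact ⟨s, η, hs, hη⟩

/-- Lemma 4.4. For all positive integers `h` and `w` there is a positive
integer `p` such that if `G` has path-width at least `p`, then in any tree-decomposition of
`G` of width less than `w` there is a cascade of height `h` (of some size). -/
theorem cascade_exists_of_large_pathwidth (h w : ℕ) (hh : 0 < h) (hw : 0 < w) :
    ∃ p : ℕ, 0 < p ∧ ∀ (V : Type) [Fintype V] (G : SimpleGraph V), p ≤ pathwidth G →
      ∀ (T : Type) [Fintype T] (Tr : SimpleGraph T) (X : T → Finset V),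
        IsTreeDecomp G Tr X → (∀ t, (X t).card ≤ w) →
          ∃ (s : ℕ) (η : TVert h → T), 0 < s ∧ IsCascade Tr X h s η := by
  obtain ⟨p, hp, hcascade⟩ := cascade_exists_of_large_pathwidth_general h w
  exact ⟨p, hp, fun V _ G hG T _ Tr X => hcascade V G hG T Tr X⟩
end
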